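/- arXiv:1701.05212 — 5 statements merged into one kernel-verified Lean document; each statement's English description precedes it below -/
import Mathlib

section
/- For every integer t with 1 ≤ t ≤ 55 there exists a linear code over the field with 64 elements of length 171, dimension 2t, minimum distance at least 171 − 3t − 3 = 168 − 3t, and locality 2. In particular (t = 51), there exists a linear code over the field with 64 elements of length 171, dimension 102, minimum distance at least 13, and locality 2. -/
namespace LRC64

set_option linter.unusedSectionVars false
set_option linter.unusedFintypeInType false

open Polynomial WeierstrassCurve

variable {K : Type*} [Field K]

/-- The elliptic curve `y^2 + y = x^3 + 1`. -/
def E (K : Type*) [Field K] : Affine K := ⟨0, 0, 1, 0, 1⟩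

/-- The affine coordinate ring of `E`. -/
abbrev A (K : Type*) [Field K] := (E K).CoordinateRing

/-- Affine rational points. -/
abbrev Pnt (K : Type*) [Field K] := {P : K × K // P.2 ^ 2 + P.2 = P.1 ^ 3 + 1}

lemma poly_eq : (E K).polynomial = X ^ 2 + X - C (X ^ 3 + 1) := by
  rw [Affine.polynomial]
  simp [E]

/-- The class of `y`. -/
noncomputable def yy : A K := Affine.CoordinateRing.mk (E K) X

/-- The element `p(x) + q(x) y`. -/
noncomputable def el (p q : K[X]) : A K := p • (1 : A K) + q • yy

/-- Evaluation at a point. -/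
noncomputable def ev (P : Pnt K) : A K →+* K :=
  AdjoinRoot.lift (evalRingHom P.1.1) P.1.2 (by
    have h := P.2
    rw [poly_eq, eval₂_sub, eval₂_add, eval₂_pow, eval₂_X, eval₂_C]
    simp
    linear_combination h)

lemma ev_smul (P : Pnt K) (p : K[X]) (f : A K) : ev P (p • f) = p.eval P.1.1 * ev P f := by
  rw [Affine.CoordinateRing.smul, map_mul]
  congr 1
  simp [ev]

lemma ev_el (P : Pnt K) (p q : K[X]) :
    ev P (el p q) = p.eval P.1.1 + q.eval P.1.1 * P.1.2 := by
  rw [el, map_add, ev_smul, ev_smul, map_one, mul_one]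
  congr 2
  simp [ev, yy]

lemma exists_el (f : A K) : ∃ p q : K[X], f = el p q := by
  obtain ⟨p, q, h⟩ := Affine.CoordinateRing.exists_smul_basis_eq f
  exact ⟨p, q, h.symm⟩

lemma el_inj {p q p' q' : K[X]} (h : el p q = el p' q') : p = p' ∧ q = q' := by
  have : el (p - p') (q - q') = (0 : A K) := by
    rw [← sub_eq_zero.mpr h]; simp only [el, sub_smul]; abel
  have := Affine.CoordinateRing.smul_basis_eq_zero this
  exact ⟨sub_eq_zero.mp this.1, sub_eq_zero.mp this.2⟩

lemma smul_el (r p q : K[X]) : r • el p q = el (r * p) (r * q) := by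
  simp only [el, smul_add, mul_smul]

section char2
variable [CharP K 2]

lemma two0 : (2 : K) = 0 := CharTwo.two_eq_zero

lemma two0P : (2 : K[X]) = 0 := by
  have := congrArg (C : K → K[X]) (two0 (K := K))
  rwa [map_ofNat, map_zero] at this

lemma two0A : (2 : A K) = 0 := by
  have := congrArg (algebraMap K[X] (A K)) (two0P (K := K))
  rwa [map_ofNat, map_zero] at this

/-- The conjugate point. -/
def neg (P : Pnt K) : Pnt K := ⟨(P.1.1, P.1.2 + 1), by
  have h := P.2
  have h2 := two0 (K := K)
  simp only
  linear_combination h + (P.1.2 + 1) * h2⟩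

lemma yy_eq : (yy : A K) ^ 2 + yy = algebraMap K[X] (A K) (X ^ 3 + 1) := by
  have h : Affine.CoordinateRing.mk (E K) (X ^ 2 + X - C (X ^ 3 + 1)) = 0 := by
    rw [← poly_eq]; exact AdjoinRoot.mk_self
  rw [map_sub, map_add, map_pow, sub_eq_zero] at h
  exact h

/-- Conjugation `y ↦ y + 1`. -/
noncomputable def conj : A K →+* A K :=
  AdjoinRoot.lift (algebraMap K[X] (A K)) (yy + 1) (by
    have h := yy_eq (K := K)
    have h2 := two0A (K := K)
    have h3 : eval₂ (algebraMap K[X] (A K)) (yy + 1) (X ^ 2 + X - C (X ^ 3 + 1)) = 0 := by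
      rw [eval₂_sub, eval₂_add, eval₂_pow, eval₂_X, eval₂_C]
      linear_combination h + (yy + 1) * h2
    rwa [← poly_eq] at h3)

lemma conj_yy : conj (yy : A K) = yy + 1 := by
  rw [conj]
  exact AdjoinRoot.lift_root _

lemma conj_alg (p : K[X]) : conj (algebraMap K[X] (A K) p) = algebraMap K[X] (A K) p := by
  rw [conj]
  exact AdjoinRoot.lift_of _

lemma conj_el (p q : K[X]) : conj (el p q) = el (p + q) q := by
  simp only [el, Algebra.smul_def, map_add, map_mul, map_one, conj_yy, conj_alg]
  ring

lemma ev_conj (P : Pnt K) (f : A K) : ev P (conj f) = ev (neg P) f := by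
  obtain ⟨p, q, rfl⟩ := exists_el f
  rw [conj_el, ev_el, ev_el]
  simp [neg]; ring

lemma mul_conj (f : A K) : f * conj f = algebraMap K[X] (A K) (Algebra.norm K[X] f) := by
  obtain ⟨p, q, rfl⟩ := exists_el f
  rw [conj_el]
  rw [show Algebra.norm K[X] (el p q) = _ from Affine.CoordinateRing.norm_smul_basis p q]
  have h := yy_eq (K := K)
  have h2 := two0A (K := K)
  simp only [el, Algebra.smul_def, E, map_zero, map_one, map_add, map_mul, map_sub, map_pow,
    zero_mul, zero_add, mul_one, add_zero] at h ⊢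
  set a := algebraMap K[X] (A K) p
  set b := algebraMap K[X] (A K) q
  set x := algebraMap K[X] (A K) X
  linear_combination b ^ 2 * h + (a * b * yy + a * b + b ^ 2 * (x ^ 3 + 1)) * h2

lemma dvd_of_ev (P : Pnt K) (f : A K) (h1 : ev P f = 0) (h2 : ev (neg P) f = 0) :
    algebraMap K[X] (A K) (X - C P.1.1) ∣ f := by
  obtain ⟨p, q, rfl⟩ := exists_el f
  rw [ev_el] at h1 h2
  simp [neg] at h2
  have hq : q.eval P.1.1 = 0 := by linear_combination h2 - h1
  have hp : p.eval P.1.1 = 0 := by linear_combination h1 - P.1.2 * hq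
  obtain ⟨p', rfl⟩ := dvd_iff_isRoot.mpr hp
  obtain ⟨q', rfl⟩ := dvd_iff_isRoot.mpr hq
  refine ⟨el p' q', ?_⟩
  rw [← smul_el, Algebra.smul_def]

lemma dvd_of_algebraMap_dvd (a b : K[X])
    (h : algebraMap K[X] (A K) a ∣ algebraMap K[X] (A K) b) : a ∣ b := by
  obtain ⟨f, hf⟩ := h
  obtain ⟨p, q, rfl⟩ := exists_el f
  have h1 : el b 0 = el (a * p) (a * q) := by
    rw [← smul_el, Algebra.smul_def, ← hf, Algebra.algebraMap_eq_smul_one]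
    simp [el]
  exact ⟨p, (el_inj h1).1⟩

/-- The maximal ideal of a point. -/
noncomputable def I (P : Pnt K) : Ideal (A K) := RingHom.ker (ev P)

lemma I_mul (P : Pnt K) :
    I P * (I P).map conj ≤ Ideal.span {algebraMap K[X] (A K) (X - C P.1.1)} := by
  have h : (I P).map conj ≤ RingHom.ker (ev (neg P)) := by
    rw [Ideal.map_le_iff_le_comap]
    intro f hf
    rw [Ideal.mem_comap, RingHom.mem_ker, ev_conj]
    have : neg (neg P) = P := by
      apply Subtype.ext
      apply Prod.ext
      · rfl
      · simp only [neg]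
        linear_combination two0 (K := K)
    rw [this]
    exact hf
  rw [Ideal.mul_le]
  intro f hf g hg
  rw [Ideal.mem_span_singleton]
  have hf : ev P f = 0 := hf
  have hg : ev (neg P) g = 0 := h hg
  apply dvd_of_ev
  · rw [map_mul, hf, zero_mul]
  · rw [map_mul, hg, mul_zero]

lemma I_coprime {P Q : Pnt K} (h : P ≠ Q) : IsCoprime (I P) (I Q) := by
  have hs : ∀ P : Pnt K, Function.Surjective (ev P) := fun P a =>
    ⟨el (C a) 0, by rw [ev_el]; simp⟩
  have : (I P).IsMaximal := RingHom.ker_isMaximal_of_surjective _ (hs P)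
  have : (I Q).IsMaximal := RingHom.ker_isMaximal_of_surjective _ (hs Q)
  refine Ideal.isCoprime_of_isMaximal (fun hPQ => h ?_)
  have h1 : el (X - C P.1.1) 0 ∈ I Q := by
    rw [← hPQ, I, RingHom.mem_ker, ev_el]; simp
  have h2 : el (- C P.1.2) 1 ∈ I Q := by
    rw [← hPQ, I, RingHom.mem_ker, ev_el]; simp
  rw [I, RingHom.mem_ker, ev_el] at h1 h2
  simp at h1 h2
  apply Subtype.ext
  apply Prod.ext
  · linear_combination -h1
  · linear_combination -h2

lemma prod_dvd_norm (S : Finset (Pnt K)) (w : Pnt K → ℕ) (G : A K)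
    (h : ∀ P ∈ S, G ∈ I P ^ w P) :
    ∏ P ∈ S, (X - C P.1.1) ^ w P ∣ Algebra.norm K[X] G := by
  apply dvd_of_algebraMap_dvd
  rw [← mul_conj, map_prod, ← Ideal.mem_span_singleton, ← Ideal.prod_span_singleton]
  have h1 : G ∈ ∏ P ∈ S, I P ^ w P := by
    rw [Ideal.prod_eq_iInf_of_pairwise_isCoprime]
    · simpa using h
    · intro P _ Q _ hPQ
      exact (I_coprime hPQ).pow
  have h2 : conj G ∈ ∏ P ∈ S, ((I P).map conj) ^ w P := by
    have := Ideal.mem_map_of_mem conj h1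
    rw [← Ideal.mapHom_apply] at this
    simpa [map_prod, Ideal.map_pow] using this
  have h3 := Ideal.mul_mem_mul h1 h2
  rw [← Finset.prod_mul_distrib] at h3
  have h4 : ∏ P ∈ S, I P ^ w P * ((I P).map conj) ^ w P ≤
      ∏ P ∈ S, Ideal.span {algebraMap K[X] (A K) ((X - C P.1.1) ^ w P)} := by
    apply Finset.prod_le_prod'
    intro P _
    rw [← mul_pow, map_pow, ← Ideal.span_singleton_pow]
    exact Ideal.pow_right_mono (I_mul P) _
  exact h4 h3

lemma degree_el (p q : K[X]) : (Algebra.norm K[X] (el p q)).degree =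
    max (2 • p.degree) (2 • q.degree + 3) :=
  Affine.CoordinateRing.degree_norm_smul_basis p q

lemma degree_add_le' (f g : A K) : (Algebra.norm K[X] (f + g)).degree ≤
    max (Algebra.norm K[X] f).degree (Algebra.norm K[X] g).degree := by
  obtain ⟨p, q, rfl⟩ := exists_el f
  obtain ⟨r, s, rfl⟩ := exists_el g
  have : el p q + el r s = el (p + r) (q + s) := by simp only [el, add_smul]; abel
  rw [this, degree_el, degree_el, degree_el]
  have h1 := degree_add_le p r
  have h2 := degree_add_le q s
  refine max_le ?_ ?_
  · rcases le_max_iff.mp h1 with h | h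
    · exact le_max_of_le_left (le_max_of_le_left (nsmul_le_nsmul_right h 2))
    · exact le_max_of_le_right (le_max_of_le_left (nsmul_le_nsmul_right h 2))
  · rcases le_max_iff.mp h2 with h | h
    · exact le_max_of_le_left (le_max_of_le_right (by gcongr))
    · exact le_max_of_le_right (le_max_of_le_right (by gcongr))

/-- The class of `x`. -/
noncomputable def xx : A K := el X 0

lemma yy_el : (yy : A K) = el 0 1 := by simp [el]

lemma degree_xx : (Algebra.norm K[X] (xx : A K)).degree = 2 := by
  rw [xx, degree_el]; simp

lemma degree_yy : (Algebra.norm K[X] (yy : A K)).degree = 3 := by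
  rw [yy_el, degree_el]; simp

lemma norm_ne {f : A K} (h : f ≠ 0) : Algebra.norm K[X] f ≠ 0 := by
  intro h0
  obtain ⟨p, q, rfl⟩ := exists_el f
  have := degree_el p q
  rw [h0, degree_zero] at this
  have h1 : 2 • p.degree = ⊥ := le_bot_iff.mp (this ▸ le_max_left _ _)
  have h2 : 2 • q.degree + 3 = ⊥ := le_bot_iff.mp (this ▸ le_max_right _ _)
  have hp : p = 0 := by
    rw [← degree_eq_bot]
    rw [two_nsmul, WithBot.add_eq_bot] at h1
    tauto
  have hq : q = 0 := by
    rw [← degree_eq_bot]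
    rw [two_nsmul, WithBot.add_eq_bot, WithBot.add_eq_bot] at h2
    rcases h2 with h2 | h2
    · tauto
    · exact absurd h2 (by decide)
  apply h
  simp [hp, hq, el]

lemma natDegree_xx : (Algebra.norm K[X] (xx : A K)).natDegree = 2 :=
  natDegree_eq_of_degree_eq_some degree_xx

lemma natDegree_yy : (Algebra.norm K[X] (yy : A K)).natDegree = 3 :=
  natDegree_eq_of_degree_eq_some degree_yy

/-- `x` times the norm of `f0 + z f1`. -/
noncomputable def GG (f0 f1 : A K) : A K := xx * f0 ^ 3 + yy * f1 ^ 3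

lemma xx_ne : (xx : A K) ≠ 0 := by
  intro h
  have h0 : (0 : A K) = el 0 0 := by simp [el]
  rw [h0, xx] at h
  exact X_ne_zero (el_inj h).1

lemma yy_ne : (yy : A K) ≠ 0 := by
  intro h
  have h0 : (0 : A K) = el 0 0 := by simp [el]
  rw [h0, yy_el] at h
  exact one_ne_zero (el_inj h).2

lemma GG_ne {f0 f1 : A K} (h : ¬ (f0 = 0 ∧ f1 = 0)) : GG f0 f1 ≠ 0 := by
  intro h0
  rw [GG] at h0
  by_cases hf0 : f0 = 0
  · subst hf0
    simp [yy_ne] at h0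
    exact h ⟨rfl, h0⟩
  by_cases hf1 : f1 = 0
  · subst hf1
    simp [xx_ne] at h0
    exact h ⟨h0, rfl⟩
  have e : xx * f0 ^ 3 = yy * (- f1) ^ 3 := by linear_combination h0
  have e2 := congrArg (fun f => (Algebra.norm K[X] f).natDegree) e
  have hf1' : -f1 ≠ 0 := neg_ne_zero.mpr hf1
  simp only [map_mul, map_pow] at e2
  rw [natDegree_mul (norm_ne xx_ne) (pow_ne_zero _ (norm_ne hf0)),
    natDegree_mul (norm_ne yy_ne) (pow_ne_zero _ (norm_ne hf1')), natDegree_pow, natDegree_pow,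
    natDegree_xx, natDegree_yy] at e2
  omega

lemma GG_degree {f0 f1 : A K} {n : ℕ} (h0 : (Algebra.norm K[X] f0).natDegree ≤ n)
    (h1 : (Algebra.norm K[X] f1).natDegree ≤ n) :
    (Algebra.norm K[X] (GG f0 f1)).natDegree ≤ 3 * n + 3 := by
  apply natDegree_le_of_degree_le
  refine (degree_add_le' _ _).trans (max_le ?_ ?_)
  · apply degree_le_of_natDegree_le
    simp only [map_mul, map_pow]
    refine natDegree_mul_le.trans ?_
    have := natDegree_pow_le (p := Algebra.norm K[X] f0) (n := 3)
    rw [natDegree_xx]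
    omega
  · apply degree_le_of_natDegree_le
    simp only [map_mul, map_pow]
    refine natDegree_mul_le.trans ?_
    have := natDegree_pow_le (p := Algebra.norm K[X] f1) (n := 3)
    rw [natDegree_yy]
    omega

lemma ev_xx (P : Pnt K) : ev P xx = P.1.1 := by rw [xx, ev_el]; simp

lemma ev_yy (P : Pnt K) : ev P yy = P.1.2 := by rw [yy_el, ev_el]; simp

/-- The key bound on the number of zeros of `f0 + z f1`. -/
lemma zero_count {ι : Type*} (T : Finset ι) (pt : ι → Pnt K) (z : ι → K)
    (hz : ∀ i ∈ T, z i ^ 3 * (pt i).1.1 = (pt i).1.2) (hx : ∀ i ∈ T, (pt i).1.1 ≠ 0)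
    (hinj : ∀ i ∈ T, ∀ j ∈ T, pt i = pt j → z i = z j → i = j)
    (f0 f1 : A K) (n : ℕ) (h0 : (Algebra.norm K[X] f0).natDegree ≤ n)
    (h1 : (Algebra.norm K[X] f1).natDegree ≤ n) (hne : ¬ (f0 = 0 ∧ f1 = 0))
    (hzero : ∀ i ∈ T, ev (pt i) f0 + z i * ev (pt i) f1 = 0) : T.card ≤ 3 * n + 3 := by
  classical
  rw [Finset.card_eq_sum_card_image pt T]
  set w : Pnt K → ℕ := fun P => {a ∈ T | pt a = P}.card with hw
  have hmem : ∀ P ∈ T.image pt, GG f0 f1 ∈ I P ^ w P := by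
    intro P hP
    obtain ⟨i, hi, rfl⟩ := Finset.mem_image.mp hP
    by_cases hb : ev (pt i) f0 = 0 ∧ ev (pt i) f1 = 0
    · have hG : GG f0 f1 ∈ I (pt i) ^ 3 := by
        rw [GG]
        exact Ideal.add_mem _ (Ideal.mul_mem_left _ _ (Ideal.pow_mem_pow hb.1 3))
          (Ideal.mul_mem_left _ _ (Ideal.pow_mem_pow hb.2 3))
      refine Ideal.pow_le_pow_right ?_ hG
      have hsub : ({a ∈ T | pt a = pt i}.image z) ⊆
          (nthRoots 3 ((pt i).1.2 / (pt i).1.1)).toFinset := by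
        intro c hc
        obtain ⟨j, hj, rfl⟩ := Finset.mem_image.mp hc
        obtain ⟨hj, hji⟩ := Finset.mem_filter.mp hj
        rw [Multiset.mem_toFinset, mem_nthRoots (by norm_num), eq_div_iff (hx i hi), ← hji]
        exact hz j hj
      have hc : ({a ∈ T | pt a = pt i}.image z).card = w (pt i) := by
        apply Finset.card_image_of_injOn
        intro a ha b hb hab
        simp at ha hb
        exact hinj a ha.1 b hb.1 (ha.2.trans hb.2.symm) hab
      rw [← hc]
      exact (Finset.card_le_card hsub).trans ((Multiset.toFinset_card_le _).trans
        (card_nthRoots _ _))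
    · have hG : GG f0 f1 ∈ I (pt i) ^ 1 := by
        rw [pow_one, I, RingHom.mem_ker, GG]
        simp only [map_add, map_mul, map_pow, ev_xx, ev_yy]
        have e1 := hzero i hi
        have e2 := hz i hi
        have e3 : ev (pt i) f0 = - (z i * ev (pt i) f1) := by linear_combination e1
        rw [← e2, e3]
        ring
      refine Ideal.pow_le_pow_right ?_ hG
      apply Finset.card_le_one.mpr
      intro a ha b hb'
      simp at ha hb'
      apply hinj a ha.1 b hb'.1 (ha.2.trans hb'.2.symm)
      have e1 := hzero a ha.1
      have e2 := hzero b hb'.1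
      rw [ha.2] at e1
      rw [hb'.2] at e2
      by_contra hab
      have e3 : (z a - z b) * ev (pt i) f1 = 0 := by linear_combination e1 - e2
      have e4 := (mul_eq_zero.mp e3).resolve_left (sub_ne_zero.mpr hab)
      rw [e4] at e1
      exact hb ⟨by simpa using e1, e4⟩
  have hd := prod_dvd_norm (T.image pt) w (GG f0 f1) hmem
  have hle := natDegree_le_of_dvd hd (norm_ne (GG_ne hne))
  rw [natDegree_prod_of_monic _ _ (fun P _ => (monic_X_sub_C _).pow _)] at hle
  simp only [natDegree_pow, natDegree_X_sub_C, mul_one] at hle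
  exact hle.trans (GG_degree h0 h1)

end char2

/-! ## Counting points -/

section count
variable [Fintype K] [CharP K 2]

/-- The polynomial whose roots are the `y`-coordinates used. -/
noncomputable def gp (K : Type*) [Field K] : K[X] :=
  X ^ 0 + X ^ 1 + X ^ 2 + X ^ 6 + X ^ 7 + X ^ 9 + X ^ 10 + X ^ 12 + X ^ 13 + X ^ 15 + X ^ 17
  + X ^ 19

lemma card_roots_of_dvd (hK : Fintype.card K = 64) (P : K[X]) (h : P ∣ X ^ 64 - X) :
    ∃ s : Finset K, s.card = P.natDegree ∧ ∀ a, a ∈ s ↔ P.eval a = 0 := by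
  classical
  have hr := FiniteField.roots_X_pow_card_sub_X K
  rw [hK] at hr
  have h0 : (X ^ 64 - X : K[X]) ≠ 0 := FiniteField.X_pow_card_sub_X_ne_zero K (by norm_num)
  have hsp : (X ^ 64 - X : K[X]).Splits := by
    rw [splits_iff_card_roots, hr, FiniteField.X_pow_card_sub_X_natDegree_eq K (by norm_num)]
    simp [hK]
  have hP : P ≠ 0 := fun hP => h0 (by simpa [hP] using h)
  have hPs : P.Splits := hsp.of_dvd h0 h
  have hnd : P.roots.Nodup := by
    refine Multiset.nodup_of_le (roots.le_of_dvd h0 h) ?_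
    rw [hr]
    exact Finset.univ.nodup
  refine ⟨P.roots.toFinset, ?_, ?_⟩
  · rw [Multiset.toFinset_card_of_nodup hnd, ← splits_iff_card_roots.mp hPs]
  · intro a
    rw [Multiset.mem_toFinset, mem_roots hP]
    rfl

lemma gp_dvd : gp K ∣ X ^ 64 - X := by
  refine ⟨X ^ 1 + X ^ 2 + X ^ 4 + X ^ 5 + X ^ 9 + X ^ 10 + X ^ 12 + X ^ 13 + X ^ 22 + X ^ 25 + X ^
    26 + X ^ 29 + X ^ 33 + X ^ 34 + X ^ 36 + X ^ 37 + X ^ 38 + X ^ 43 + X ^ 45, ?_⟩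
  have h2 := two0P (K := K)
  rw [gp]
  linear_combination (-1 : K[X]) * ((1) * X ^ 1 + (1) * X ^ 2 + (1) * X ^ 3 + (1) * X ^ 4 + (1) * X ^ 5 + (1) * X ^ 6 + (1) *
    X ^ 7 + (1) * X ^ 8 + (1) * X ^ 9 + (2) * X ^ 10 + (3) * X ^ 11 + (2) * X ^ 12 + (2) * X ^
    13 + (3) * X ^ 14 + (2) * X ^ 15 + (2) * X ^ 16 + (2) * X ^ 17 + (2) * X ^ 18 + (3) * X ^
    19 + (2) * X ^ 20 + (2) * X ^ 21 + (3) * X ^ 22 + (2) * X ^ 23 + (2) * X ^ 24 + (2) * X ^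
    25 + (2) * X ^ 26 + (2) * X ^ 27 + (2) * X ^ 28 + (2) * X ^ 29 + (1) * X ^ 30 + (2) * X ^
    31 + (2) * X ^ 32 + (1) * X ^ 33 + (2) * X ^ 34 + (3) * X ^ 35 + (2) * X ^ 36 + (2) * X ^
    37 + (3) * X ^ 38 + (3) * X ^ 39 + (2) * X ^ 40 + (2) * X ^ 41 + (2) * X ^ 42 + (3) * X ^
    43 + (3) * X ^ 44 + (3) * X ^ 45 + (3) * X ^ 46 + (2) * X ^ 47 + (2) * X ^ 48 + (2) * X ^
    49 + (2) * X ^ 50 + (2) * X ^ 51 + (2) * X ^ 52 + (2) * X ^ 53 + (1) * X ^ 54 + (2) * X ^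
    55 + (1) * X ^ 56 + (1) * X ^ 57 + (1) * X ^ 58 + (1) * X ^ 60 + (1) * X ^ 62) * h2

lemma gp_natDegree : (gp K).natDegree = 19 := by
  rw [gp]
  compute_degree!

lemma gp_root {y : K} (h : (gp K).eval y = 0) : y ≠ 0 ∧ y ^ 21 = (y ^ 2 + y + 1) ^ 7 := by
  have h2 := two0 (K := K)
  simp only [gp, eval_add, eval_pow, eval_X] at h
  constructor
  · rintro rfl
    simp at h
  · linear_combination (y ^ 2 + 1) * h - ((-3) * y ^ 1 + (-13) * y ^ 2 + (-38) * y ^ 3 + (-80) * y ^ 4 + (-133) * y ^ 5 + (-178) * y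
    ^ 6 + (-196) * y ^ 7 + (-178) * y ^ 8 + (-132) * y ^ 9 + (-80) * y ^ 10 + (-38) * y ^ 11 +
    (-13) * y ^ 12 + (-3) * y ^ 13 + (1) * y ^ 15 + (1) * y ^ 17 + (1) * y ^ 19 + (y ^ 2 + y + 1) ^ 7) * h2

lemma exists_omega (hK : Fintype.card K = 64) : ∃ w : K, w ≠ 1 ∧ w ^ 3 = 1 := by
  obtain ⟨s, hs, hm⟩ := card_roots_of_dvd hK (X ^ 3 - 1 : K[X]) (by
    refine (?_ : (X ^ 3 - 1 : K[X]) ∣ (X ^ 3) ^ 21 - 1 ^ 21).trans ⟨X, by ring⟩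
    exact sub_dvd_pow_sub_pow _ _ _)
  have hd : (X ^ 3 - 1 : K[X]).natDegree = 3 := by compute_degree!
  rw [hd] at hs
  obtain ⟨w, hw, hne⟩ := Finset.exists_mem_ne (by omega : 1 < s.card) (1 : K)
  refine ⟨w, hne, ?_⟩
  have := (hm w).mp hw
  simp at this
  linear_combination this

/-- The evaluation points of the code, as pairs `(y, z)` with `x = y / z ^ 3`. -/
lemma exists_points (hK : Fintype.card K = 64) : ∃ T : Finset (Σ _ : K, K), T.card = 171 ∧
    (∀ P ∈ T, P.1 ≠ 0 ∧ P.2 ≠ 0 ∧ P.2 ^ 9 * (P.1 ^ 2 + P.1 + 1) = P.1 ^ 3) ∧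
    (∀ P ∈ T, ∀ w : K, w ^ 3 = 1 → (⟨P.1, w * P.2⟩ : Σ _ : K, K) ∈ T) := by
  classical
  obtain ⟨Y, hYc, hY⟩ := card_roots_of_dvd hK (gp K) gp_dvd
  rw [gp_natDegree] at hYc
  have hZ : ∀ y : K, ∃ Z : Finset K, y ∈ Y → Z.card = 9 ∧
      ∀ z, z ∈ Z ↔ z ^ 9 = y ^ 3 / (y ^ 2 + y + 1) := by
    intro y
    by_cases hy : y ∈ Y
    · obtain ⟨hy0, hy1⟩ := gp_root ((hY y).mp hy)
      set c := y ^ 3 / (y ^ 2 + y + 1) with hc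
      have hne : y ^ 2 + y + 1 ≠ 0 := by
        intro h
        rw [h] at hy1
        simp [hy0] at hy1
      have hc7 : c ^ 7 = 1 := by
        rw [hc, div_pow, div_eq_one_iff_eq (pow_ne_zero _ hne), ← hy1]
        ring
      obtain ⟨Z, hZc, hZ⟩ := card_roots_of_dvd hK (X ^ 9 - C c : K[X]) (by
        refine (?_ : (X ^ 9 - C c : K[X]) ∣ (X ^ 9) ^ 7 - (C c) ^ 7).trans ⟨X, ?_⟩
        · exact sub_dvd_pow_sub_pow _ _ _
        · rw [← C_pow, hc7, C_1]
          ring)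
      rw [natDegree_X_pow_sub_C] at hZc
      refine ⟨Z, fun _ => ⟨hZc, fun z => ?_⟩⟩
      rw [hZ]
      simp [sub_eq_zero]
    · exact ⟨∅, fun h => absurd h hy⟩
  choose Z hZ using hZ
  refine ⟨Y.sigma Z, ?_, ?_, ?_⟩
  · rw [Finset.card_sigma, Finset.sum_congr rfl (fun y hy => (hZ y hy).1)]
    simp [hYc]
  · rintro ⟨y, z⟩ hP
    obtain ⟨hy, hz⟩ := Finset.mem_sigma.mp hP
    simp only at hy hz ⊢
    obtain ⟨hy0, hy1⟩ := gp_root ((hY y).mp hy)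
    have hne : y ^ 2 + y + 1 ≠ 0 := by
      intro h
      rw [h] at hy1
      simp [hy0] at hy1
    have h9 := ((hZ y hy).2 z).mp hz
    rw [eq_div_iff hne] at h9
    refine ⟨hy0, ?_, h9⟩
    rintro rfl
    simp at h9
    exact pow_ne_zero 3 hy0 h9.symm
  · rintro ⟨y, z⟩ hP w hw
    obtain ⟨hy, hz⟩ := Finset.mem_sigma.mp hP
    simp only at hy hz ⊢
    refine Finset.mem_sigma.mpr ⟨hy, ?_⟩
    rw [(hZ y hy).2]
    rw [(hZ y hy).2] at hz
    rw [← hz]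
    linear_combination (w ^ 6 + w ^ 3 + 1) * z ^ 9 * hw

/-- The parameter space of the code. -/
abbrev V (K : Type*) [Field K] (t : ℕ) :=
  (degreeLT K (t / 2 + 1) × degreeLT K ((t - 1) / 2)) ×
    (degreeLT K (t / 2 + 1) × degreeLT K ((t - 1) / 2))

lemma finrank_V {t : ℕ} (ht : 1 ≤ t) : Module.finrank K (V K t) = 2 * t := by
  have h (n : ℕ) : Module.finrank K (degreeLT K n) = n := by
    rw [(degreeLTEquiv K n).finrank_eq]; simp
  have hf (n : ℕ) : Module.Finite K (degreeLT K n) := Module.Finite.equiv (degreeLTEquiv K n).symm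
  have := hf (t / 2 + 1)
  have := hf ((t - 1) / 2)
  rw [Module.finrank_prod, Module.finrank_prod, h, h]
  omega

/-- The encoding map. -/
noncomputable def enc {ι : Type*} (t : ℕ) (x y z : ι → K) : V K t →ₗ[K] (ι → K) where
  toFun v i := (v.1.1.1.eval (x i) + v.1.2.1.eval (x i) * y i) +
    z i * (v.2.1.1.eval (x i) + v.2.2.1.eval (x i) * y i)
  map_add' u v := by
    ext i
    simp
    ring
  map_smul' c v := by
    ext i
    simp
    ring

lemma norm_deg {t : ℕ} (ht : 1 ≤ t) (p : degreeLT K (t / 2 + 1)) (q : degreeLT K ((t - 1) / 2)) :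
    (Algebra.norm K[X] (el p.1 q.1)).natDegree ≤ t := by
  obtain ⟨p, hp⟩ := p
  obtain ⟨q, hq⟩ := q
  rw [mem_degreeLT] at hp hq
  apply natDegree_le_of_degree_le
  rw [degree_el]
  refine max_le ?_ ?_
  · by_cases h : p = 0
    · simp [h]
    · rw [degree_eq_natDegree h] at hp ⊢
      have hp' : p.natDegree < t / 2 + 1 := by exact_mod_cast hp
      have : 2 * p.natDegree ≤ t := by omega
      rw [two_nsmul]
      exact_mod_cast (by omega : p.natDegree + p.natDegree ≤ t)
  · by_cases h : q = 0
    · simp [h]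
    · rw [degree_eq_natDegree h] at hq ⊢
      have hq' : q.natDegree < (t - 1) / 2 := by exact_mod_cast hq
      rw [two_nsmul]
      exact_mod_cast (by omega : q.natDegree + q.natDegree + 3 ≤ t)

theorem main (hK : Fintype.card K = 64) (t : ℕ) (ht : 1 ≤ t) (ht' : t ≤ 55) :
    ∃ C : Submodule K (Fin 171 → K),
        Module.finrank K C = 2 * t ∧
        (∀ x : Fin 171 → K, x ∈ C → x ≠ 0 →
          168 - 3 * t ≤ Nat.card {i : Fin 171 // x i ≠ 0}) ∧
        (∀ i : Fin 171, ∃ I : Finset (Fin 171), i ∉ I ∧ I.card ≤ 2 ∧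
          ∀ x ∈ C, ∀ y ∈ C, (∀ j ∈ I, x j = y j) → x i = y i) := by
  classical
  obtain ⟨T, hTc, hT, hTw⟩ := exists_points hK
  obtain ⟨w, hw1, hw3⟩ := exists_omega hK
  let e : Fin 171 ≃ T := (Finset.equivFinOfCardEq hTc).symm
  let y : Fin 171 → K := fun i => (e i).1.1
  let z : Fin 171 → K := fun i => (e i).1.2
  let x : Fin 171 → K := fun i => y i / z i ^ 3
  have hy0 (i) : y i ≠ 0 := (hT _ (e i).2).1
  have hz0 (i) : z i ≠ 0 := (hT _ (e i).2).2.1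
  have h9 (i) : z i ^ 9 * (y i ^ 2 + y i + 1) = y i ^ 3 := (hT _ (e i).2).2.2
  have hzx (i) : z i ^ 3 * x i = y i := mul_div_cancel₀ _ (pow_ne_zero _ (hz0 i))
  have hx0 (i) : x i ≠ 0 := div_ne_zero (hy0 i) (pow_ne_zero _ (hz0 i))
  have heq (i) : y i ^ 2 + y i = x i ^ 3 + 1 := by
    have h := h9 i
    have h' : z i ^ 9 * (y i ^ 2 + y i + 1) = z i ^ 9 * x i ^ 3 := by
      rw [h, ← hzx i]; ring
    have h'' := mul_left_cancel₀ (pow_ne_zero _ (hz0 i)) h'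
    linear_combination h'' - two0 (K := K)
  have hinj (i j) (h1 : y i = y j) (h2 : z i = z j) : i = j := by
    apply e.injective
    apply Subtype.ext
    exact Sigma.ext h1 (heq_of_eq h2)
  let pt : Fin 171 → Pnt K := fun i => ⟨(x i, y i), heq i⟩
  have henc (v : V K t) (i) : enc t x y z v i =
      ev (pt i) (el v.1.1.1 v.1.2.1) + z i * ev (pt i) (el v.2.1.1 v.2.2.1) := by
    rw [ev_el, ev_el]
    rfl
  have key (v : V K t) (hv : v ≠ 0) :
      (Finset.univ.filter (fun i => enc t x y z v i = 0)).card ≤ 3 * t + 3 := by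
    refine zero_count _ pt z (fun i _ => hzx i) (fun i _ => hx0 i) ?_
      (el v.1.1.1 v.1.2.1) (el v.2.1.1 v.2.2.1) t (norm_deg ht _ _) (norm_deg ht _ _) ?_ ?_
    · intro i _ j _ h1 h2
      exact hinj i j (congrArg (fun P => P.1.2) h1) h2
    · rintro ⟨h1, h2⟩
      have h0 : (0 : A K) = el 0 0 := by simp [el]
      rw [h0] at h1 h2
      obtain ⟨a1, a2⟩ := el_inj h1
      obtain ⟨a3, a4⟩ := el_inj h2
      apply hv
      refine Prod.ext (Prod.ext (Subtype.ext a1) (Subtype.ext a2))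
        (Prod.ext (Subtype.ext a3) (Subtype.ext a4))
    · intro i hi
      rw [← henc]
      exact (Finset.mem_filter.mp hi).2
  have hinjE : Function.Injective (enc t x y z) := by
    rw [← LinearMap.ker_eq_bot, LinearMap.ker_eq_bot']
    intro v hv
    by_contra hne
    have := key v hne
    rw [hv] at this
    simp at this
    omega
  refine ⟨LinearMap.range (enc t x y z), ?_, ?_, ?_⟩
  · rw [LinearMap.finrank_range_of_inj hinjE, finrank_V ht]
  · rintro _ ⟨v, rfl⟩ hne
    have hv : v ≠ 0 := by
      rintro rfl
      simp at hne
    have h1 := key v hv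
    have h2 := Finset.card_filter_add_card_filter_not (s := (Finset.univ : Finset (Fin 171)))
      (fun i => enc t x y z v i = 0)
    rw [Nat.card_eq_fintype_card, Fintype.card_subtype]
    simp only [Finset.card_univ, Fintype.card_fin] at h2
    simp only [ne_eq]
    omega
  · intro i
    have hsum : 1 + w + w ^ 2 = 0 := by
      have : (w - 1) * (1 + w + w ^ 2) = 0 := by linear_combination hw3
      exact (mul_eq_zero.mp this).resolve_left (sub_ne_zero.mpr hw1)
    have hw0 : w ≠ 0 := by
      rintro rfl
      simp at hw3
    have hex (u : K) (hu : u ^ 3 = 1) : ∃ j, y j = y i ∧ z j = u * z i := by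
      refine ⟨e.symm ⟨_, hTw _ (e i).2 u hu⟩, ?_, ?_⟩
      · simp [y]
      · simp [z]
    obtain ⟨j, hjy, hjz⟩ := hex w hw3
    obtain ⟨k, hky, hkz⟩ := hex (w ^ 2) (by linear_combination (w ^ 3 + 1) * hw3)
    have hjx : x j = x i := by
      simp only [x, hjy, hjz, mul_pow, hw3, one_mul]
    have hkx : x k = x i := by
      simp only [x, hky, hkz, mul_pow, ← pow_mul, show w ^ (2 * 3) = (w ^ 3) ^ 2 by ring, hw3,
        one_pow, one_mul]
    have hrel (v : V K t) : enc t x y z v i =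
        - (w * enc t x y z v j + w ^ 2 * enc t x y z v k) := by
      simp only [enc, LinearMap.coe_mk, AddHom.coe_mk, hjx, hkx, hjy, hky, hjz, hkz]
      set a := eval (x i) v.1.1.1 + eval (x i) v.1.2.1 * y i
      set b := eval (x i) v.2.1.1 + eval (x i) v.2.2.1 * y i
      linear_combination (a + z i * b) * hsum + z i * b * w * hw3
    refine ⟨{j, k}, ?_, Finset.card_le_two, ?_⟩
    · simp only [Finset.mem_insert, Finset.mem_singleton, not_or]
      constructor
      · rintro rfl
        exact hw1 (mul_right_cancel₀ (hz0 i) (by rw [← hjz, one_mul]))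
      · rintro rfl
        have h1 : w ^ 2 = 1 := mul_right_cancel₀ (hz0 i) (by rw [← hkz, one_mul])
        exact hw1 (by linear_combination hw3 - w * h1)
    · rintro _ ⟨u, rfl⟩ _ ⟨v, rfl⟩ huv
      rw [hrel, hrel, huv j (by simp), huv k (by simp)]

end count

end LRC64

theorem exists_LRC_F64_length171 :
    ∀ t : ℕ, 1 ≤ t → t ≤ 55 →
      ∃ C : Submodule (GaloisField 2 6) (Fin 171 → GaloisField 2 6),
        Module.finrank (GaloisField 2 6) C = 2 * t ∧
        (∀ x : Fin 171 → GaloisField 2 6, x ∈ C → x ≠ 0 →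
          168 - 3 * t ≤ Nat.card {i : Fin 171 // x i ≠ 0}) ∧
        (∀ i : Fin 171, ∃ I : Finset (Fin 171), i ∉ I ∧ I.card ≤ 2 ∧
          ∀ x ∈ C, ∀ y ∈ C, (∀ j ∈ I, x j = y j) → x i = y i) := by
  intro t ht ht'
  have := Fintype.ofFinite (GaloisField 2 6)
  refine LRC64.main ?_ t ht ht'
  rw [← Nat.card_eq_fintype_card, GaloisField.card 2 6 (by norm_num)]
  norm_num
end

section
/- For every integer t with 1 ≤ t ≤ 28 there exists a linear code over the field with 32 elements of length 87, dimension 2t, minimum distance at least 87 − 3t − 3 = 84 − 3t, and locality 2. -/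
open Polynomial

namespace LRC

variable {K : Type*} [Field K]

/-- The numerator of `f` at `x`. -/
def pv (x : K) : K := x ^ 2 + x ^ 4
/-- The denominator of `f` at `x`. -/
def qv (x : K) : K := 1 + x + x ^ 3 + x ^ 5 + x ^ 6
/-- The cubic over the point `x`. -/
def cubic (x z : K) : K := qv x * (z ^ 3 + z + 1) + pv x * (z ^ 2 + z)

lemma eq_one_of_pow (x : K) (k : ℕ) (hk : Nat.gcd k 31 = 1) (h31 : x ^ 31 = 1) (h : x ^ k = 1) :
    x = 1 := by
  have : x ^ Nat.gcd k 31 = 1 := pow_gcd_eq_one.mpr ⟨h, h31⟩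
  rwa [hk, pow_one] at this

lemma factor (h2 : (2 : K) = 0) (x : K) (h31 : x ^ 31 = 1) (h1 : x ≠ 1) :
    1 + x^2 + x^5 = 0 ∨ 1 + x^2 + x^3 + x^4 + x^5 = 0 ∨ 1 + x + x^2 + x^4 + x^5 = 0 ∨ 1 + x + x^2 + x^3 + x^5 = 0 ∨ 1 + x + x^3 + x^4 + x^5 = 0 ∨ 1 + x^3 + x^5 = 0 := by
  have h : (1 + x^2 + x^5) * (1 + x^2 + x^3 + x^4 + x^5) * (1 + x + x^2 + x^4 + x^5) * (1 + x + x^2 + x^3 + x^5) * (1 + x + x^3 + x^4 + x^5) * (1 + x^3 + x^5) * (x - 1) = 0 := by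
    linear_combination h31 + (-1*x - 2*x^2 - 4*x^3 - 6*x^4 - 11*x^5 - 14*x^6 - 19*x^7 - 24*x^8 - 26*x^9 - 33*x^10 
        - 27*x^11 - 28*x^12 - 22*x^13 - 12*x^14 - 10*x^15 + 10*x^16 + 12*x^17 + 22*x^18 + 
        28*x^19 + 27*x^20 + 33*x^21 + 26*x^22 + 24*x^23 + 19*x^24 + 14*x^25 + 11*x^26 + 
        6*x^27 + 4*x^28 + 2*x^29 + x^30) * h2
  have h1' : x - 1 ≠ 0 := sub_ne_zero.mpr h1
  simpa only [mul_eq_zero, h1', or_false, or_assoc] using h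

lemma exists_root (h2 : (2 : K) = 0) (x : K) (h31 : x ^ 31 = 1) (h1 : x ≠ 1) :
    ∃ z : K, z ^ 31 = 1 ∧ z ≠ 1 ∧ cubic x z = 0 := by
  have key : ∀ k : ℕ, Nat.gcd k 31 = 1 → cubic x (x ^ k) = 0 →
      ∃ z : K, z ^ 31 = 1 ∧ z ≠ 1 ∧ cubic x z = 0 := by
    intro k hk hc
    refine ⟨x ^ k, ?_, fun h => h1 (eq_one_of_pow x k hk h31 h), hc⟩
    rw [← pow_mul, mul_comm, pow_mul, h31, one_pow]
  rcases factor h2 x h31 h1 with h | h | h | h | h | h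
  · refine key 19 (by norm_num) ?_
    unfold cubic pv qv
    linear_combination (1 + x + x^2 + x^4 + x^6 + x^7 + x^8 + x^10 + x^11 + x^15 + x^16 + x^17 + x^18 + 
        x^20 + x^22 + x^27 + x^29 + x^31 + x^32 + x^33 + x^35 + x^36 + x^41 + x^42 + x^43 + 
        x^44 + x^45 + x^48 + x^49 + x^51 + x^54 + x^57 + x^58) * h +
        (-1*x^2 - 1*x^4 - 1*x^6 - 1*x^7 - 1*x^8 - 1*x^9 - 1*x^10 - 1*x^11 - 1*x^12 - 1*x^13 - 
        1*x^15 - 1*x^16 - 1*x^17 - 1*x^18 - 1*x^20 - 1*x^22 - 1*x^27 - 1*x^29 - 1*x^31 - 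
        1*x^32 - 1*x^33 - 1*x^34 - 1*x^35 - 1*x^36 - 1*x^37 - 1*x^38 - 1*x^41 - 1*x^43 - 
        1*x^44 - 1*x^45 - 1*x^46 - 1*x^47 - 1*x^48 - 1*x^49 - 1*x^50 - 1*x^51 - 1*x^53 - 
        1*x^54 - 1*x^56 - 1*x^59) * h2
  · refine key 3 (by norm_num) ?_
    unfold cubic pv qv
    linear_combination (1 + x + x^2 + x^5 + x^7 + x^8 + x^10) * h +
        (-1*x^2 - 1*x^4 - 1*x^5 - 1*x^7 - 1*x^10 - 1*x^11 - 1*x^12 - 1*x^13) * h2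
  · refine key 3 (by norm_num) ?_
    unfold cubic pv qv
    linear_combination (1 + x^2 + x^3 + x^6 + x^10) * h +
        (-1*x^2 - 1*x^4 - 1*x^7 + x^9 - 1*x^11) * h2
  · refine key 8 (by norm_num) ?_
    unfold cubic pv qv
    linear_combination (1 + x^2 + x^3 + x^7 + x^8 + x^9 + x^11 + x^13 + x^15 + x^16 + x^19 + x^20 + x^21 + 
        x^22 + x^23 + x^24 + x^25) * h +
        (-1*x^2 - 1*x^3 - 1*x^4 - 1*x^5 - 1*x^7 - 1*x^8 - 1*x^9 - 1*x^10 - 1*x^11 - 1*x^12 - 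
        1*x^13 - 1*x^14 - 1*x^15 - 2*x^16 - 1*x^17 - 1*x^18 - 1*x^19 - 1*x^20 - 2*x^21 - 
        2*x^22 - 2*x^23 - 2*x^24 - 2*x^25 - 2*x^26 - 1*x^27 - 1*x^28) * h2
  · refine key 11 (by norm_num) ?_
    unfold cubic pv qv
    linear_combination (1 + x^4 + x^5 + x^7 + x^8 + x^9 + x^10 + x^14 + x^15 + x^20 + x^21 + x^22 + x^24 + 
        x^26 + x^27 + x^32 + x^34) * h +
        (-1*x^4 - 1*x^5 - 1*x^7 - 2*x^8 - 2*x^9 - 2*x^10 - 1*x^11 - 1*x^12 - 1*x^13 - 1*x^14 - 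
        1*x^15 - 1*x^18 - 1*x^19 - 1*x^20 - 1*x^21 - 1*x^22 - 1*x^23 - 1*x^24 - 2*x^25 - 
        1*x^26 - 2*x^27 - 1*x^28 - 1*x^29 - 1*x^30 - 1*x^31 - 1*x^32 - 1*x^35 - 1*x^37) * h2
  · refine key 8 (by norm_num) ?_
    unfold cubic pv qv
    linear_combination (1 + x + x^4 + x^7 + x^8 + x^14 + x^17 + x^18 + x^19 + x^21 + x^23 + x^24 + x^25) * h +
        (-1*x^4 - 1*x^7 - 1*x^17 - 1*x^19 - 1*x^21 - 1*x^22 - 1*x^23 - 1*x^24 - 1*x^26 - 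
        1*x^28) * h2

lemma no_omega (h2 : (2 : K) = 0) (z : K) (h31 : z ^ 31 = 1) (hz : z ^ 2 + z + 1 = 0) : False := by
  have h3 : z ^ 3 = 1 := by linear_combination (z - 1) * hz
  have := eq_one_of_pow z 3 (by norm_num) h31 h3
  subst this
  exact one_ne_zero (α := K) (by linear_combination hz - h2)

/-- The three roots of the cubic over a good point. -/
lemma exists_roots (h2 : (2 : K) = 0) (x : K) (h31 : x ^ 31 = 1) (h1 : x ≠ 1) :
    ∃ Z : Fin 3 → K, Function.Injective Z ∧ ∀ j, cubic x (Z j) = 0 := by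
  obtain ⟨z, hz31, hz1, hz⟩ := exists_root h2 x h31 h1
  have hz0 : z ≠ 0 := by rintro rfl; simp at hz31
  have hz1' : z + 1 ≠ 0 := by
    intro h; apply hz1; linear_combination h - h2
  have hw := no_omega h2 z hz31
  have e01 : z ≠ 1 / (z + 1) := by
    intro h
    rw [eq_div_iff hz1'] at h
    exact hw (by linear_combination h + h2)
  have e02 : z ≠ (z + 1) / z := by
    intro h
    rw [eq_div_iff hz0] at h
    exact hw (by linear_combination h + (z + 1) * h2)
  have e12 : 1 / (z + 1) ≠ (z + 1) / z := by
    intro h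
    rw [div_eq_div_iff hz1' hz0] at h
    exact hw (by linear_combination -h)
  refine ⟨![z, 1 / (z + 1), (z + 1) / z], ?_, ?_⟩
  · intro i j hij
    fin_cases i <;> fin_cases j <;> simp_all
  · intro j
    unfold cubic at hz ⊢
    fin_cases j
    · exact hz
    · simp only [Fin.mk_one, Matrix.cons_val_one, Matrix.cons_val_zero]
      field_simp
      linear_combination hz + (qv x * (2*z^2 + 2*z + 1) + pv x * (1 + z)) * h2
    · simp only [Fin.reduceFinMk, Matrix.cons_val]
      field_simp
      linear_combination hz + (qv x * (z^3 + 2*z^2 + z) + pv x * (z^2 + z^3)) * h2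

/-- `f` numerator. -/
noncomputable def pP : K[X] := X ^ 2 + X ^ 4
/-- `f` denominator. -/
noncomputable def qP : K[X] := 1 + X + X ^ 3 + X ^ 5 + X ^ 6
/-- The norm of `a + b z`. -/
noncomputable def nrm (a b : K[X]) : K[X] :=
  qP * (a ^ 3 + a * b ^ 2 + b ^ 3) + pP * (a ^ 2 * b + a * b ^ 2)

lemma nrm_mul (c a b : K[X]) : nrm (c * a) (c * b) = c ^ 3 * nrm a b := by
  unfold nrm; ring

lemma cubic_zero (h2 : (2 : K) = 0) (hK : ∀ x : K, x ≠ 0 → x ^ 31 = 1) (a b : K)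
    (h : a ^ 3 + a * b ^ 2 + b ^ 3 = 0) : a = 0 ∧ b = 0 := by
  by_cases hb : b = 0
  · subst hb; simpa using h
  exfalso
  set z := a / b with hz
  have ha : a = z * b := by rw [hz]; field_simp
  have hz3 : z ^ 3 + z + 1 = 0 := by
    have : b ^ 3 * (z ^ 3 + z + 1) = 0 := by rw [ha] at h; linear_combination h
    simpa [hb] using this
  have hz0 : z ≠ 0 := by intro h0; rw [h0] at hz3; simp at hz3
  have h7 : z ^ 7 = 1 := by
    linear_combination (z ^ 4 + z ^ 2 + z + 1) * hz3 - (z ^ 5 + z ^ 4 + z ^ 3 + z ^ 2 + z + 1) * h2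
  have := eq_one_of_pow z 7 (by norm_num) (hK z hz0) h7
  rw [this] at hz3
  exact one_ne_zero (α := K) (by linear_combination hz3 - h2)

lemma X_pow_dvd (h2 : (2 : K) = 0) (hK : ∀ x : K, x ≠ 0 → x ^ 31 = 1) (n : ℕ) :
    ∀ a b : K[X], nrm a b = 0 → X ^ n ∣ a ∧ X ^ n ∣ b := by
  induction n with
  | zero => intro a b _; simp
  | succ n ih =>
    intro a b h
    have h0 := congrArg (eval 0) h
    simp only [nrm, pP, qP, eval_add, eval_mul, eval_pow, eval_X, eval_one, eval_zero] at h0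
    obtain ⟨ha, hb⟩ := cubic_zero h2 hK (eval 0 a) (eval 0 b) (by linear_combination h0)
    have ha' : X ∣ a := by rwa [X_dvd_iff, coeff_zero_eq_eval_zero]
    have hb' : X ∣ b := by rwa [X_dvd_iff, coeff_zero_eq_eval_zero]
    obtain ⟨a', rfl⟩ := ha'
    obtain ⟨b', rfl⟩ := hb'
    rw [nrm_mul] at h
    have h' : nrm a' b' = 0 := by simpa using h
    obtain ⟨h1, h3⟩ := ih a' b' h'
    rw [pow_succ']
    exact ⟨mul_dvd_mul_left _ h1, mul_dvd_mul_left _ h3⟩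

lemma eq_zero_of_X_pow_dvd (a : K[X]) (h : ∀ n, X ^ n ∣ a) : a = 0 := by
  by_contra ha
  have := natDegree_le_of_dvd (h (a.natDegree + 1)) ha
  simp at this

lemma nrm_ne_zero (h2 : (2 : K) = 0) (hK : ∀ x : K, x ≠ 0 → x ^ 31 = 1) (a b : K[X])
    (hab : ¬ (a = 0 ∧ b = 0)) : nrm a b ≠ 0 := fun h =>
  hab ⟨eq_zero_of_X_pow_dvd a fun n => (X_pow_dvd h2 hK n a b h).1,
    eq_zero_of_X_pow_dvd b fun n => (X_pow_dvd h2 hK n a b h).2⟩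

lemma nrm_natDegree (a b : K[X]) (s : ℕ) (ha : a.natDegree ≤ s) (hb : b.natDegree ≤ s) :
    (nrm a b).natDegree ≤ 6 + 3 * s := by
  have hq : (qP : K[X]).natDegree ≤ 6 := by unfold qP; compute_degree
  have hp : (pP : K[X]).natDegree ≤ 6 := by
    have : (pP : K[X]).natDegree ≤ 4 := by unfold pP; compute_degree
    omega
  have m3 : ∀ u v w : K[X], u.natDegree ≤ s → v.natDegree ≤ s → w.natDegree ≤ s →
      (u * v * w).natDegree ≤ 3 * s := by
    intro u v w hu hv hw
    refine (natDegree_mul_le_of_le (natDegree_mul_le_of_le hu hv) hw).trans ?_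
    omega
  have e : nrm a b = qP * (a * a * a + a * b * b + b * b * b) + pP * (a * a * b + a * b * b) := by
    unfold nrm; ring
  rw [e]
  refine natDegree_add_le_of_degree_le (natDegree_mul_le_of_le hq ?_)
    (natDegree_mul_le_of_le hp ?_)
  · exact natDegree_add_le_of_degree_le (natDegree_add_le_of_degree_le (m3 _ _ _ ha ha ha)
      (m3 _ _ _ ha hb hb)) (m3 _ _ _ hb hb hb)
  · exact natDegree_add_le_of_degree_le (m3 _ _ _ ha ha hb) (m3 _ _ _ ha hb hb)

open Classical in
lemma mult (a b : K[X]) (hn : nrm a b ≠ 0) (x : K) (Z : Fin 3 → K) (hZ : Function.Injective Z)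
    (hc : ∀ j, cubic x (Z j) = 0) :
    (Finset.univ.filter fun j : Fin 3 => a.eval x - Z j * b.eval x = 0).card ≤
      (nrm a b).rootMultiplicity x := by
  by_cases hb : b.eval x = 0
  · by_cases ha : a.eval x = 0
    · have h3 : 3 ≤ (nrm a b).rootMultiplicity x := by
        rw [le_rootMultiplicity_iff hn]
        obtain ⟨a', ha'⟩ := dvd_iff_isRoot.mpr ha
        obtain ⟨b', hb'⟩ := dvd_iff_isRoot.mpr hb
        rw [ha', hb', nrm_mul]
        exact dvd_mul_right _ _
      refine le_trans (Finset.card_le_univ _) ?_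
      simpa using h3
    · simp [hb, ha]
  · by_cases hex : ∃ j, a.eval x - Z j * b.eval x = 0
    · have h1 : 1 ≤ (nrm a b).rootMultiplicity x := by
        refine (rootMultiplicity_pos hn).mpr ?_
        obtain ⟨j, hj⟩ := hex
        have hcj := hc j
        rw [sub_eq_zero] at hj
        simp only [IsRoot.def, nrm, pP, qP, eval_add, eval_mul, eval_pow, eval_X, eval_one, hj]
        unfold cubic pv qv at hcj
        linear_combination (b.eval x) ^ 3 * hcj
      refine le_trans ?_ h1
      rw [Finset.card_le_one]
      intro i hi j hj
      simp only [Finset.mem_filter, Finset.mem_univ, true_and] at hi hj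
      apply hZ
      exact mul_right_cancel₀ hb (by linear_combination hj - hi)
    · push Not at hex
      simp [hex]

open Classical in
lemma sum_mult (f : K[X]) {n : ℕ} (e : Fin n → K) (he : Function.Injective e) :
    ∑ i, f.rootMultiplicity (e i) ≤ f.natDegree := by
  have h1 : ∑ i, f.rootMultiplicity (e i) = ∑ x ∈ Finset.univ.image e, f.roots.count x := by
    rw [Finset.sum_image (fun i _ j _ h => he h)]
    simp [count_roots]
  rw [h1]
  refine le_trans ?_ f.card_roots'
  rw [← Multiset.toFinset_sum_count_eq f.roots]
  refine Finset.sum_le_sum_of_ne_zero fun x _ hx => ?_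
  rw [Multiset.mem_toFinset]
  exact Multiset.count_ne_zero.mp hx

end LRC

open LRC in
theorem main_aux {K : Type*} [Field K] (h2 : (2 : K) = 0) (hK : ∀ x : K, x ≠ 0 → x ^ 31 = 1)
    (e : Fin 29 → K) (he : Function.Injective e) (he0 : ∀ i, e i ≠ 0) (he1 : ∀ i, e i ≠ 1)
    (t : ℕ) (ht1 : 1 ≤ t) (ht : t ≤ 28) :
      ∃ C : Submodule K (Fin 87 → K),
        Module.finrank K C = 2 * t ∧
        (∀ x : Fin 87 → K, x ∈ C → x ≠ 0 →
          84 - 3 * t ≤ Nat.card {i : Fin 87 // x i ≠ 0}) ∧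
        (∀ i : Fin 87, ∃ I : Finset (Fin 87), i ∉ I ∧ I.card ≤ 2 ∧
          ∀ x ∈ C, ∀ y ∈ C, (∀ j ∈ I, x j = y j) → x i = y i) := by
  classical
  choose Z hZ hc using fun i => exists_roots h2 (e i) (hK _ (he0 i)) (he1 i)
  let φ : Fin 29 × Fin 3 ≃ Fin 87 := finProdFinEquiv
  let L : (degreeLT K t × degreeLT K t) →ₗ[K] (Fin 87 → K) :=
    { toFun := fun ab k => (ab.1 : K[X]).eval (e (φ.symm k).1) -
        Z (φ.symm k).1 (φ.symm k).2 * (ab.2 : K[X]).eval (e (φ.symm k).1)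
      map_add' := by
        intro u v; funext k; simp; ring
      map_smul' := by
        intro c v; funext k; simp; ring }
  have hL : ∀ ab i j, L ab (φ (i, j)) = (ab.1 : K[X]).eval (e i) -
        Z i j * (ab.2 : K[X]).eval (e i) := by
    intro ab i j
    simp [L]
  have hrec : ∀ (ab : degreeLT K t × degreeLT K t) (i : Fin 29) (j k : Fin 3), j ≠ k →
      L ab (φ (i, j)) = 0 → L ab (φ (i, k)) = 0 →
      (ab.1 : K[X]).eval (e i) = 0 ∧ (ab.2 : K[X]).eval (e i) = 0 := by
    intro ab i j k hjk h1 h3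
    rw [hL] at h1 h3
    have hz : Z i j - Z i k ≠ 0 := sub_ne_zero.mpr fun h => hjk (hZ i h)
    have hb : (ab.2 : K[X]).eval (e i) = 0 := by
      have : (Z i j - Z i k) * (ab.2 : K[X]).eval (e i) = 0 := by linear_combination h3 - h1
      simpa [hz] using this
    refine ⟨?_, hb⟩
    simpa [hb] using h1
  have hzero : ∀ a : degreeLT K t, (∀ i, (a : K[X]).eval (e i) = 0) → a = 0 := by
    intro a h
    by_contra hne
    have hne' : (a : K[X]) ≠ 0 := by simpa using hne
    have hd := mem_degreeLT.mp a.2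
    refine hne' (eq_zero_of_degree_lt_of_eval_index_eq_zero (v := e) Finset.univ he.injOn ?_
      fun i _ => h i)
    refine lt_of_lt_of_le hd ?_
    simp only [Finset.card_univ, Fintype.card_fin]
    exact_mod_cast (by omega : t ≤ 29)
  have hinj : Function.Injective L := by
    rw [← LinearMap.ker_eq_bot, LinearMap.ker_eq_bot']
    intro ab h
    have hh := fun i => hrec ab i 0 1 (by decide) (congrFun h _) (congrFun h _)
    exact Prod.ext (hzero _ fun i => (hh i).1) (hzero _ fun i => (hh i).2)
  refine ⟨LinearMap.range L, ?_, ?_, ?_⟩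
  · rw [LinearMap.finrank_range_of_inj hinj]
    have hf : Module.finrank K (degreeLT K t) = t := by
      rw [(degreeLTEquiv K t).finrank_eq]; simp
    have : Module.Finite K (degreeLT K t) := Module.Finite.equiv (degreeLTEquiv K t).symm
    rw [Module.finrank_prod, hf]; omega
  · rintro _ ⟨ab, rfl⟩ hne
    have hab : ¬ ((ab.1 : K[X]) = 0 ∧ (ab.2 : K[X]) = 0) := by
      rintro ⟨h1, h3⟩
      apply hne
      have : ab = 0 := Prod.ext (Subtype.ext h1) (Subtype.ext h3)
      rw [this, map_zero]
    have hn := nrm_ne_zero h2 hK _ _ hab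
    have hdeg : ∀ a : degreeLT K t, (a : K[X]).natDegree ≤ t - 1 := by
      intro a
      have hd := mem_degreeLT.mp a.2
      by_cases h0 : (a : K[X]) = 0
      · simp [h0]
      · have := (natDegree_lt_iff_degree_lt h0).mpr hd
        omega
    have hnd := nrm_natDegree _ _ (t - 1) (hdeg ab.1) (hdeg ab.2)
    have hzc : (Finset.univ.filter fun k : Fin 87 => L ab k = 0).card ≤ 3 * t + 3 := by
      calc (Finset.univ.filter fun k : Fin 87 => L ab k = 0).card
          = ∑ k : Fin 87, if L ab k = 0 then 1 else 0 := by rw [Finset.card_filter]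
        _ = ∑ ij : Fin 29 × Fin 3, if L ab (φ ij) = 0 then 1 else 0 :=
            (Equiv.sum_comp φ fun k => if L ab k = 0 then 1 else 0).symm
        _ = ∑ i : Fin 29, ∑ j : Fin 3, if L ab (φ (i, j)) = 0 then 1 else 0 :=
            Fintype.sum_prod_type _
        _ ≤ ∑ i : Fin 29, (nrm (ab.1 : K[X]) ab.2).rootMultiplicity (e i) := by
            refine Finset.sum_le_sum fun i _ => ?_
            rw [← Finset.card_filter]
            simp only [hL]
            exact mult _ _ hn (e i) (Z i) (hZ i) (hc i)
        _ ≤ (nrm (ab.1 : K[X]) ab.2).natDegree := sum_mult _ e he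
        _ ≤ 3 * t + 3 := by omega
    have hsum := Finset.card_filter_add_card_filter_not (s := (Finset.univ : Finset (Fin 87)))
      (fun k => L ab k = 0)
    rw [Nat.card_eq_fintype_card, Fintype.card_subtype]
    simp only [Finset.card_univ, Fintype.card_fin] at hsum
    simp only [ne_eq]
    omega
  · intro k
    obtain ⟨⟨i, j⟩, rfl⟩ := φ.surjective k
    have hj : ∃ j1 j2 : Fin 3, j1 ≠ j2 ∧ j ≠ j1 ∧ j ≠ j2 := by
      revert j; decide
    obtain ⟨j1, j2, h12, h01, h02⟩ := hj
    refine ⟨{φ (i, j1), φ (i, j2)}, ?_, Finset.card_le_two, ?_⟩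
    · simp [h01, h02]
    · rintro _ ⟨u, rfl⟩ _ ⟨v, rfl⟩ h
      have e1 := h (φ (i, j1)) (by simp)
      have e2 := h (φ (i, j2)) (by simp)
      have hh := hrec (u - v) i j1 j2 h12 (by rw [map_sub, Pi.sub_apply, e1, sub_self])
        (by rw [map_sub, Pi.sub_apply, e2, sub_self])
      have h3 : L (u - v) (φ (i, j)) = 0 := by rw [hL, hh.1, hh.2]; simp
      rwa [map_sub, Pi.sub_apply, sub_eq_zero] at h3


theorem exists_LRC_F32_length87 :
    ∀ t : ℕ, 1 ≤ t → t ≤ 28 →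
      ∃ C : Submodule (GaloisField 2 5) (Fin 87 → GaloisField 2 5),
        Module.finrank (GaloisField 2 5) C = 2 * t ∧
        (∀ x : Fin 87 → GaloisField 2 5, x ∈ C → x ≠ 0 →
          84 - 3 * t ≤ Nat.card {i : Fin 87 // x i ≠ 0}) ∧
        (∀ i : Fin 87, ∃ I : Finset (Fin 87), i ∉ I ∧ I.card ≤ 2 ∧
          ∀ x ∈ C, ∀ y ∈ C, (∀ j ∈ I, x j = y j) → x i = y i) := by
  classical
  intro t ht1 ht
  have : Fintype (GaloisField 2 5) := Fintype.ofFinite _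
  have hcard : Fintype.card (GaloisField 2 5) = 32 := by
    rw [← Nat.card_eq_fintype_card, GaloisField.card 2 5 (by norm_num)]; norm_num
  have h2 : (2 : GaloisField 2 5) = 0 := by
    exact_mod_cast CharP.cast_eq_zero (GaloisField 2 5) 2
  have hK : ∀ x : GaloisField 2 5, x ≠ 0 → x ^ 31 = 1 := by
    intro x hx
    have := FiniteField.pow_card_sub_one_eq_one x hx
    rwa [hcard] at this
  have hs : Fintype.card (Fin 29) ≤
      Fintype.card {x : GaloisField 2 5 // x ∉ ({0, 1} : Finset (GaloisField 2 5))} := by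
    have h3 := Finset.card_compl ({0, 1} : Finset (GaloisField 2 5))
    rw [hcard, Finset.card_pair zero_ne_one] at h3
    rw [Fintype.card_subtype, Fintype.card_fin]
    have h4 : (Finset.univ.filter fun x => x ∉ ({0, 1} : Finset (GaloisField 2 5))) =
        ({0, 1} : Finset (GaloisField 2 5))ᶜ := by
      ext x; simp
    rw [h4, h3]; norm_num
  obtain ⟨e⟩ := Function.Embedding.nonempty_of_card_le hs
  have hm : ∀ i, (e i : GaloisField 2 5) ≠ 0 ∧ (e i : GaloisField 2 5) ≠ 1 := by
    intro i
    simpa using (e i).2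
  exact main_aux h2 hK (fun i => (e i : GaloisField 2 5))
    (Subtype.val_injective.comp e.injective) (fun i => (hm i).1) (fun i => (hm i).2) t ht1 ht
end

section
/- For every integer t with 1 ≤ t ≤ 7 there exists a linear code over the field with 64 elements of length 81 and dimension 4t, with minimum distance at least 81 − 9t − 12 = 69 − 9t, such that every coordinate has two disjoint recovering sets of size 2. In particular (t = 7), there exists a linear code over the field with 64 elements of length 81 and dimension 28, with minimum distance at least 6, in which every coordinate has two disjoint recovering sets of size 2. -/
/-!
The code is a generalized concatenated code.  The 81 coordinates are triples `(s, i, j)` with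
`s : Fin 9` and `i j : Fin 3`; a message is a tuple of polynomials `(pa, pb, pc, pd)` of degrees
less than `ka, kb, kc, kd`, and its codeword is
`pa(e s) x_i y_j + pb(e s) x_i + pc(e s) (x_i + y_j) + pd(e s)`.
-/

namespace LRC81

open Polynomial

variable {F : Type} [Field F]

/-- An affine function with nonzero slope has at least two nonzero values on three points. -/
lemma two_le_affine [DecidableEq F] (y : Fin 3 → F) (hy : Function.Injective y) (a b : F)
    (ha : a ≠ 0) : 2 ≤ ∑ j, if a * y j + b ≠ 0 then 1 else 0 := by
  have key : ∀ j k, j ≠ k → a * y j + b = 0 → a * y k + b = 0 → False := by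
    intro j k hjk h1 h2
    apply hjk
    apply hy
    apply mul_left_cancel₀ ha
    linear_combination h1 - h2
  have h01 := key 0 1 (by decide)
  have h02 := key 0 2 (by decide)
  have h12 := key 1 2 (by decide)
  rw [Fin.sum_univ_three]
  by_cases h0 : a * y 0 + b = 0 <;> by_cases h1 : a * y 1 + b = 0 <;>
    by_cases h2 : a * y 2 + b = 0 <;> simp_all

/-- The inner word. -/
def inner (x y : Fin 3 → F) (A B C D : F) (i j : Fin 3) : F :=
  A * (x i * y j) + B * x i + C * (x i + y j) + D

/-- The weight of an inner word. -/
def wt [DecidableEq F] (x y : Fin 3 → F) (A B C D : F) : ℕ :=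
  ∑ i, ∑ j, if inner x y A B C D i j ≠ 0 then 1 else 0

lemma wt_A [DecidableEq F] (x y : Fin 3 → F) (hx : Function.Injective x)
    (hy : Function.Injective y) (A B C D : F) (hA : A ≠ 0) : 4 ≤ wt x y A B C D := by
  have h1 := two_le_affine x hx A C hA
  have h2 : ∀ i, 2 * (if A * x i + C ≠ 0 then 1 else 0) ≤
      ∑ j, if inner x y A B C D i j ≠ 0 then 1 else 0 := by
    intro i
    by_cases h : A * x i + C = 0
    · simp [h]
    · have h3 := two_le_affine y hy (A * x i + C) (B * x i + C * x i + D) h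
      have h4 : ∀ j, inner x y A B C D i j = (A * x i + C) * y j + (B * x i + C * x i + D) := by
        intro j
        unfold inner
        ring
      simp only [h4]
      simpa [h] using h3
  have h5 := Finset.sum_le_sum (fun i (_ : i ∈ Finset.univ) => h2 i)
  rw [← Finset.mul_sum] at h5
  unfold wt
  omega

lemma wt_B [DecidableEq F] (x y : Fin 3 → F) (hx : Function.Injective x)
    (hy : Function.Injective y) (B C D : F) (hB : B ≠ 0) : 6 ≤ wt x y 0 B C D := by
  by_cases hC : C = 0
  · subst hC
    have h1 := two_le_affine x hx B D hB
    have h2 : wt x y 0 B 0 D = 3 * ∑ i, (if B * x i + D ≠ 0 then 1 else 0) := by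
      unfold wt inner
      rw [Finset.mul_sum]
      apply Finset.sum_congr rfl
      intro i _
      simp
    omega
  · have h2 : ∀ i, 2 ≤ ∑ j, if inner x y 0 B C D i j ≠ 0 then 1 else 0 := by
      intro i
      have h3 := two_le_affine y hy C (B * x i + C * x i + D) hC
      have h4 : ∀ j, inner x y 0 B C D i j = C * y j + (B * x i + C * x i + D) := by
        intro j
        unfold inner
        ring
      simpa only [h4] using h3
    have h5 := Finset.sum_le_sum (fun i (_ : i ∈ Finset.univ) => h2 i)
    simpa [wt] using h5

lemma wt_C [DecidableEq F] (x y : Fin 3 → F)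
    (hxy : Function.Injective (fun p : Fin 3 × Fin 3 => x p.1 + y p.2))
    (C D : F) (hC : C ≠ 0) : 8 ≤ wt x y 0 0 C D := by
  have h1 : wt x y 0 0 C D =
      (Finset.univ.filter (fun p : Fin 3 × Fin 3 => C * (x p.1 + y p.2) + D ≠ 0)).card := by
    rw [Finset.card_filter, Fintype.sum_prod_type]
    simp [wt, inner]
  have h2 : (Finset.univ.filter
      (fun p : Fin 3 × Fin 3 => C * (x p.1 + y p.2) + D = 0)).card ≤ 1 := by
    rw [Finset.card_le_one]
    intro p hp q hq
    simp only [Finset.mem_filter, Finset.mem_univ, true_and] at hp hq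
    apply hxy
    apply mul_left_cancel₀ hC
    linear_combination hp - hq
  have h3 := Finset.card_filter_add_card_filter_not (s := Finset.univ)
    (fun p : Fin 3 × Fin 3 => C * (x p.1 + y p.2) + D = 0)
  simp only [Finset.card_univ, Fintype.card_prod, Fintype.card_fin] at h3
  rw [h1]
  simp only [ne_eq]
  omega

lemma wt_D [DecidableEq F] (x y : Fin 3 → F) (D : F) (hD : D ≠ 0) : 9 ≤ wt x y 0 0 0 D := by
  simp [wt, inner, hD]

/-- A nonzero polynomial of degree less than `k` has at least `10 - k` nonzero values among
nine distinct points. -/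
lemma outer [DecidableEq F] (e : Fin 9 → F) (he : Function.Injective e) (k : ℕ) (p : F[X])
    (hp : p ∈ degreeLT F k) (h0 : p ≠ 0) :
    10 ≤ k + ∑ s, if p.eval (e s) ≠ 0 then 1 else 0 := by
  rw [← Finset.card_filter]
  have h3 := Finset.card_filter_add_card_filter_not (s := Finset.univ)
    (fun s => p.eval (e s) = 0)
  have hdeg : p.natDegree < k := by
    rw [mem_degreeLT] at hp
    exact (natDegree_lt_iff_degree_lt h0).2 hp
  have h4 : ((Finset.univ.filter (fun s => p.eval (e s) = 0)).image e).card ≤ p.natDegree := by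
    apply card_le_degree_of_subset_roots
    intro z hz
    simp only [Finset.mem_val, Finset.mem_image, Finset.mem_filter, Finset.mem_univ,
      true_and] at hz
    obtain ⟨s, hs, rfl⟩ := hz
    rw [mem_roots h0]
    exact hs
  rw [Finset.card_image_of_injective _ he] at h4
  simp only [Finset.card_univ, Fintype.card_fin] at h3
  simp only [ne_eq]
  omega

/-- Combining the inner weight `w` with the outer code. -/
lemma combine [DecidableEq F] (e : Fin 9 → F) (he : Function.Injective e) (k w d : ℕ) (p : F[X])
    (hp : p ∈ degreeLT F k) (h0 : p ≠ 0) (hk : k = 0 ∨ d + w * k ≤ 10 * w) (W : Fin 9 → ℕ)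
    (hW : ∀ s, p.eval (e s) ≠ 0 → w ≤ W s) : d ≤ ∑ s, W s := by
  rcases hk with rfl | hk
  · exfalso
    apply h0
    rw [mem_degreeLT] at hp
    simpa [degree_eq_bot] using hp
  have h1 := outer e he k p hp h0
  have h2 : w * (∑ s, if p.eval (e s) ≠ 0 then 1 else 0) ≤ ∑ s, W s := by
    rw [Finset.mul_sum]
    apply Finset.sum_le_sum
    intro s _
    by_cases h : p.eval (e s) = 0
    · simp [h]
    · simpa [h] using hW s h
  nlinarith

/-- The encoding map. -/
def enc (e : Fin 9 → F) (x y : Fin 3 → F) (E : Fin 81 ≃ Fin 9 × Fin 3 × Fin 3)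
    (ka kb kc kd : ℕ) :
    (degreeLT F ka × degreeLT F kb × degreeLT F kc × degreeLT F kd) →ₗ[F] (Fin 81 → F) where
  toFun m n := inner x y ((m.1 : F[X]).eval (e (E n).1)) ((m.2.1 : F[X]).eval (e (E n).1))
    ((m.2.2.1 : F[X]).eval (e (E n).1)) ((m.2.2.2 : F[X]).eval (e (E n).1)) (E n).2.1 (E n).2.2
  map_add' m m' := by
    ext n
    simp [inner]
    ring
  map_smul' c m := by
    ext n
    simp [inner]
    ring

lemma enc_weight (e : Fin 9 → F) (he : Function.Injective e) (x y : Fin 3 → F)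
    (hx : Function.Injective x) (hy : Function.Injective y)
    (hxy : Function.Injective (fun p : Fin 3 × Fin 3 => x p.1 + y p.2))
    (E : Fin 81 ≃ Fin 9 × Fin 3 × Fin 3) (ka kb kc kd d : ℕ)
    (ha : ka = 0 ∨ d + 4 * ka ≤ 10 * 4) (hb : kb = 0 ∨ d + 6 * kb ≤ 10 * 6)
    (hc : kc = 0 ∨ d + 8 * kc ≤ 10 * 8) (hd : kd = 0 ∨ d + 9 * kd ≤ 10 * 9)
    (m : degreeLT F ka × degreeLT F kb × degreeLT F kc × degreeLT F kd) (hm : m ≠ 0) :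
    d ≤ Nat.card {n : Fin 81 // enc e x y E ka kb kc kd m n ≠ 0} := by
  classical
  obtain ⟨⟨pa, hpa⟩, ⟨pb, hpb⟩, ⟨pc, hpc⟩, ⟨pd, hpd⟩⟩ := m
  have h1 : Nat.card {n : Fin 81 // enc e x y E ka kb kc kd
        (⟨pa, hpa⟩, ⟨pb, hpb⟩, ⟨pc, hpc⟩, ⟨pd, hpd⟩) n ≠ 0} =
      ∑ s, wt x y (pa.eval (e s)) (pb.eval (e s)) (pc.eval (e s)) (pd.eval (e s)) := by
    rw [Nat.card_eq_fintype_card, Fintype.card_subtype, Finset.card_filter]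
    unfold wt
    simp only [← Fintype.sum_prod_type']
    rw [← Equiv.sum_comp E]
    rfl
  rw [h1]
  by_cases ea : pa = 0
  · by_cases eb : pb = 0
    · by_cases ec : pc = 0
      · by_cases ed : pd = 0
        · exfalso
          apply hm
          subst ea eb ec ed
          rfl
        · subst ea eb ec
          apply combine e he kd 9 d pd hpd ed hd
          intro s hs
          simpa using wt_D x y _ hs
      · subst ea eb
        apply combine e he kc 8 d pc hpc ec hc
        intro s hs
        simpa using wt_C x y hxy _ _ hs
    · subst ea
      apply combine e he kb 6 d pb hpb eb hb
      intro s hs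
      simpa using wt_B x y hx hy _ _ _ hs
  · apply combine e he ka 4 d pa hpa ea ha
    intro s hs
    exact wt_A x y hx hy _ _ _ _ hs

/-- Two values of an affine function determine the third. -/
lemma recover (y : Fin 3 → F) (hy : Function.Injective y) (a b a' b' : F) (j : Fin 3)
    (h : ∀ k, k ≠ j → a * y k + b = a' * y k + b') : a * y j + b = a' * y j + b' := by
  obtain ⟨k, l, hk, hl, hkl⟩ : ∃ k l : Fin 3, k ≠ j ∧ l ≠ j ∧ k ≠ l := by
    clear h
    revert j
    decide
  have h1 := h k hk
  have h2 := h l hl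
  have h3 : a = a' := by
    have : y k - y l ≠ 0 := sub_ne_zero.2 (fun h => hkl (hy h))
    apply mul_right_cancel₀ this
    linear_combination h1 - h2
  subst h3
  linear_combination h1

lemma finrank_degreeLT (k : ℕ) : Module.finrank F (degreeLT F k) = k := by
  rw [(degreeLTEquiv F k).finrank_eq]
  simp

lemma main_code (e : Fin 9 → F) (he : Function.Injective e) (x y : Fin 3 → F)
    (hx : Function.Injective x) (hy : Function.Injective y)
    (hxy : Function.Injective (fun p : Fin 3 × Fin 3 => x p.1 + y p.2))
    (ka kb kc kd d : ℕ) (hd0 : 0 < d)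
    (ha : ka = 0 ∨ d + 4 * ka ≤ 10 * 4) (hb : kb = 0 ∨ d + 6 * kb ≤ 10 * 6)
    (hc : kc = 0 ∨ d + 8 * kc ≤ 10 * 8) (hd : kd = 0 ∨ d + 9 * kd ≤ 10 * 9) :
    ∃ C : Submodule F (Fin 81 → F),
        Module.finrank F C = ka + (kb + (kc + kd)) ∧
        (∀ x : Fin 81 → F, x ∈ C → x ≠ 0 →
          d ≤ Nat.card {i : Fin 81 // x i ≠ 0}) ∧
        (∀ i : Fin 81, ∃ I₁ I₂ : Finset (Fin 81),
          i ∉ I₁ ∧ i ∉ I₂ ∧ Disjoint I₁ I₂ ∧ I₁.card ≤ 2 ∧ I₂.card ≤ 2 ∧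
          (∀ x ∈ C, ∀ y ∈ C, (∀ j ∈ I₁, x j = y j) → x i = y i) ∧
          (∀ x ∈ C, ∀ y ∈ C, (∀ j ∈ I₂, x j = y j) → x i = y i)) := by
  let E : Fin 81 ≃ Fin 9 × Fin 3 × Fin 3 := Fintype.equivOfCardEq (by simp)
  have hw := enc_weight e he x y hx hy hxy E ka kb kc kd d ha hb hc hd
  have hinj : Function.Injective (enc e x y E ka kb kc kd) := by
    rw [injective_iff_map_eq_zero]
    intro m hm
    by_contra h
    have := hw m h
    rw [hm] at this
    simp at this
    omega
  refine ⟨LinearMap.range (enc e x y E ka kb kc kd), ?_, ?_, ?_⟩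
  · rw [LinearMap.finrank_range_of_inj hinj]
    have fin : ∀ k, Module.Finite F (degreeLT F k) := fun k =>
      Module.Finite.equiv (degreeLTEquiv F k).symm
    have fr : ∀ k, Module.Free F (degreeLT F k) := fun k => inferInstance
    rw [Module.finrank_prod, Module.finrank_prod, Module.finrank_prod]
    simp only [finrank_degreeLT]
  · rintro _ ⟨m, rfl⟩ h0
    apply hw
    rintro rfl
    exact h0 (map_zero _)
  · intro n
    obtain ⟨⟨s, i, j⟩, rfl⟩ := E.symm.surjective n
    refine ⟨(Finset.univ.erase j).image (fun k => E.symm (s, i, k)),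
      (Finset.univ.erase i).image (fun k => E.symm (s, k, j)), ?_, ?_, ?_, ?_, ?_, ?_, ?_⟩
    · simp
    · simp
    · rw [Finset.disjoint_left]
      intro n h1 h2
      simp only [Finset.mem_image, Finset.mem_erase, Finset.mem_univ, and_true] at h1 h2
      obtain ⟨k, hk, rfl⟩ := h1
      obtain ⟨l, hl, h⟩ := h2
      simp only [EmbeddingLike.apply_eq_iff_eq, Prod.mk.injEq] at h
      exact hl h.2.1
    · refine Finset.card_image_le.trans ?_
      simp
    · refine Finset.card_image_le.trans ?_
      simp
    · rintro _ ⟨m, rfl⟩ _ ⟨m', rfl⟩ h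
      have h1 : ∀ m k, enc e x y E ka kb kc kd m (E.symm (s, i, k)) =
          ((m.1 : F[X]).eval (e s) * x i + (m.2.2.1 : F[X]).eval (e s)) * y k +
          ((m.2.1 : F[X]).eval (e s) * x i + (m.2.2.1 : F[X]).eval (e s) * x i +
            (m.2.2.2 : F[X]).eval (e s)) := by
        intro m k
        simp only [enc, LinearMap.coe_mk, AddHom.coe_mk, Equiv.apply_symm_apply, inner]
        ring
      rw [h1, h1]
      apply recover y hy
      intro k hk
      rw [← h1, ← h1]
      apply h
      exact Finset.mem_image.2 ⟨k, by simp [hk], rfl⟩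
    · rintro _ ⟨m, rfl⟩ _ ⟨m', rfl⟩ h
      have h1 : ∀ m k, enc e x y E ka kb kc kd m (E.symm (s, k, j)) =
          ((m.1 : F[X]).eval (e s) * y j + (m.2.1 : F[X]).eval (e s) +
            (m.2.2.1 : F[X]).eval (e s)) * x k +
          ((m.2.2.1 : F[X]).eval (e s) * y j + (m.2.2.2 : F[X]).eval (e s)) := by
        intro m k
        simp only [enc, LinearMap.coe_mk, AddHom.coe_mk, Equiv.apply_symm_apply, inner]
        ring
      rw [h1, h1]
      apply recover x hx
      intro k hk
      rw [← h1, ← h1]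
      apply h
      exact Finset.mem_image.2 ⟨k, by simp [hk], rfl⟩

/-- Evaluation points in the field with 64 elements. -/
lemma points : ∃ (e : Fin 9 → GaloisField 2 6) (x y : Fin 3 → GaloisField 2 6),
    Function.Injective e ∧ Function.Injective x ∧ Function.Injective y ∧
    Function.Injective (fun p : Fin 3 × Fin 3 => x p.1 + y p.2) := by
  have hr : Module.finrank (ZMod 2) (GaloisField 2 6) = 6 := GaloisField.finrank 2 (by norm_num)
  let b := Module.finBasisOfFinrankEq (ZMod 2) (GaloisField 2 6) hr
  let f := b.equivFun.symm
  let X : Fin 3 → Fin 6 → ZMod 2 := ![![0,0,0,0,0,0], ![1,0,0,0,0,0], ![0,1,0,0,0,0]]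
  let Y : Fin 3 → Fin 6 → ZMod 2 := ![![0,0,0,0,0,0], ![0,0,1,0,0,0], ![0,0,0,1,0,0]]
  have hX : Function.Injective X := by decide
  have hY : Function.Injective Y := by decide
  have hXY : Function.Injective (fun p : Fin 3 × Fin 3 => X p.1 + Y p.2) := by decide
  have hxy : Function.Injective (fun p : Fin 3 × Fin 3 => f (X p.1) + f (Y p.2)) := by
    simp only [← map_add]
    exact f.injective.comp hXY
  let g : Fin 9 ≃ Fin 3 × Fin 3 := Fintype.equivOfCardEq (by simp)
  exact ⟨fun s => f (X (g s).1) + f (Y (g s).2), fun i => f (X i), fun i => f (Y i),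
    hxy.comp g.injective, f.injective.comp hX, f.injective.comp hY, hxy⟩

end LRC81

/-- Theorem 6.1 applied to `y² + y = x³` over `F_64`: for each `1 ≤ t ≤ 7` there is a
linear code over `F_64` of length 81, dimension `4t`, minimum distance at least
`69 - 9t`, in which every coordinate has two disjoint recovering sets of size 2. -/
theorem exists_LRC_F64_length81_two_recovery_sets :
    ∀ t : ℕ, 1 ≤ t → t ≤ 7 →
      ∃ C : Submodule (GaloisField 2 6) (Fin 81 → GaloisField 2 6),
        Module.finrank (GaloisField 2 6) C = 4 * t ∧
        (∀ x : Fin 81 → GaloisField 2 6, x ∈ C → x ≠ 0 →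
          69 - 9 * t ≤ Nat.card {i : Fin 81 // x i ≠ 0}) ∧
        (∀ i : Fin 81, ∃ I₁ I₂ : Finset (Fin 81),
          i ∉ I₁ ∧ i ∉ I₂ ∧ Disjoint I₁ I₂ ∧ I₁.card ≤ 2 ∧ I₂.card ≤ 2 ∧
          (∀ x ∈ C, ∀ y ∈ C, (∀ j ∈ I₁, x j = y j) → x i = y i) ∧
          (∀ x ∈ C, ∀ y ∈ C, (∀ j ∈ I₂, x j = y j) → x i = y i)) := by
  intro t h1 h7
  obtain ⟨e, x, y, he, hx, hy, hxy⟩ := LRC81.points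
  have key := LRC81.main_code e he x y hx hy hxy
  interval_cases t
  · exact key 0 0 1 3 60 (by norm_num) (by norm_num) (by norm_num) (by norm_num) (by norm_num)
  · exact key 0 1 3 4 51 (by norm_num) (by norm_num) (by norm_num) (by norm_num) (by norm_num)
  · exact key 0 3 4 5 42 (by norm_num) (by norm_num) (by norm_num) (by norm_num) (by norm_num)
  · exact key 1 4 5 6 33 (by norm_num) (by norm_num) (by norm_num) (by norm_num) (by norm_num)
  · exact key 2 5 6 7 24 (by norm_num) (by norm_num) (by norm_num) (by norm_num) (by norm_num)
  · exact key 6 6 6 6 15 (by norm_num) (by norm_num) (by norm_num) (by norm_num) (by norm_num)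
  · exact key 7 7 7 7 6 (by norm_num) (by norm_num) (by norm_num) (by norm_num) (by norm_num)
end

section
/- There exists a linear code over the field with 4 elements of length 18, dimension 11, minimum distance exactly 3, and locality 2; its parameters attain the Singleton-type bound d ≤ n − k − ⌈k/r⌉ + 2 for codes of length n, dimension k, minimum distance d, and locality r, and its length satisfies n = q^2 + 2 for q = 4. -/
/-- The coordinates are arranged in six groups of three. -/
def lrcIdx (g : Fin 6) (j : Fin 3) : Fin 18 := ⟨3 * g.1 + j.1, by omega⟩

lemma lrcIdx_inj {g g' : Fin 6} {j j' : Fin 3} (h : lrcIdx g j = lrcIdx g' j') :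
    g = g' ∧ j = j' := by
  simp only [lrcIdx, Fin.mk.injEq] at h
  constructor <;> apply Fin.ext <;> omega

lemma lrcIdx_surj (i : Fin 18) : ∃ g j, lrcIdx g j = i :=
  ⟨⟨i.1 / 3, by omega⟩, ⟨i.1 % 3, by omega⟩, by apply Fin.ext; simp only [lrcIdx]; omega⟩

/-- The parity check map: one check per group, and one global check. -/
def lrcCheck {F : Type*} [Field F] (a : F) : (Fin 18 → F) →ₗ[F] ((Fin 6 → F) × F) where
  toFun x := (fun g => x (lrcIdx g 0) + x (lrcIdx g 1) + x (lrcIdx g 2),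
    ∑ g, (x (lrcIdx g 1) + a * x (lrcIdx g 2)))
  map_add' x y := by
    ext
    · simp only [Pi.add_apply, Prod.fst_add]; ring
    · simp only [Pi.add_apply, Prod.snd_add, ← Finset.sum_add_distrib]
      exact Finset.sum_congr rfl fun _ _ => by ring
  map_smul' c x := by
    ext
    · simp only [Pi.smul_apply, Prod.smul_fst, smul_eq_mul, RingHom.id_apply]; ring
    · simp only [Pi.smul_apply, Prod.smul_snd, smul_eq_mul, RingHom.id_apply, Finset.mul_sum]
      exact Finset.sum_congr rfl fun _ _ => by ring

lemma lrcCheck_surj {F : Type*} [Field F] (a : F) : Function.Surjective (lrcCheck a) := by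
  rintro ⟨y, z⟩
  refine ⟨![y 0 - z, z, 0, y 1, 0, 0, y 2, 0, 0, y 3, 0, 0, y 4, 0, 0, y 5, 0, 0], ?_⟩
  ext g
  · fin_cases g <;> simp [lrcCheck, lrcIdx]
  · simp [lrcCheck, lrcIdx, Fin.sum_univ_succ]

lemma lrc_mem {F : Type*} [Field F] {a : F} {x : Fin 18 → F}
    (hx : x ∈ LinearMap.ker (lrcCheck a)) :
    (∀ g, x (lrcIdx g 0) + x (lrcIdx g 1) + x (lrcIdx g 2) = 0) ∧
      ∑ g, (x (lrcIdx g 1) + a * x (lrcIdx g 2)) = 0 := by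
  rw [LinearMap.mem_ker] at hx
  exact ⟨fun g => congrFun (congrArg Prod.fst hx) g, congrArg Prod.snd hx⟩

/-- A codeword without three nonzero coordinates vanishes. -/
lemma lrc_dist {F : Type*} [Field F] {a : F} (h0 : a ≠ 0) (h1 : a ≠ 1) {x : Fin 18 → F}
    (hx : x ∈ LinearMap.ker (lrcCheck a))
    (h3 : ∀ i j k, i ≠ j → i ≠ k → j ≠ k → x i ≠ 0 → x j ≠ 0 → x k = 0) : x = 0 := by
  obtain ⟨hs, ht⟩ := lrc_mem hx
  have key : ∀ g j j', j ≠ j' → x (lrcIdx g j) ≠ 0 → x (lrcIdx g j') ≠ 0 → False := by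
    intro g j j' hj hn hn'
    have hd : ∀ {j j' : Fin 3}, j ≠ j' → lrcIdx g j ≠ lrcIdx g j' :=
      fun h h' => h (lrcIdx_inj h').2
    have hout : ∀ g', g' ≠ g → ∀ l, x (lrcIdx g' l) = 0 := fun g' hg l =>
      h3 _ _ _ (hd hj) (fun h => hg (lrcIdx_inj h).1.symm)
        (fun h => hg (lrcIdx_inj h).1.symm) hn hn'
    have hin : ∀ l, j ≠ l → j' ≠ l → x (lrcIdx g l) = 0 := fun l hl hl' =>
      h3 _ _ _ (hd hj) (hd hl) (hd hl') hn hn'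
    rw [Finset.sum_eq_single g (fun g' _ hg => by simp [hout g' hg]) (by simp)] at ht
    have hg := hs g
    have z0 : x (lrcIdx g 0) = 0 → x (lrcIdx g 2) = 0 := by
      intro h
      have : (a - 1) * x (lrcIdx g 2) = 0 := by linear_combination ht - hg + h
      exact (mul_eq_zero.1 this).resolve_left (sub_ne_zero.2 h1)
    have z1 : x (lrcIdx g 1) = 0 → x (lrcIdx g 2) = 0 := by
      intro h
      have : a * x (lrcIdx g 2) = 0 := by linear_combination ht - h
      exact (mul_eq_zero.1 this).resolve_left h0
    have z2 : x (lrcIdx g 2) = 0 → x (lrcIdx g 1) = 0 ∧ x (lrcIdx g 0) = 0 := by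
      intro h
      exact ⟨by linear_combination ht - a * h, by linear_combination hg - ht - h + a * h⟩
    have hz : x (lrcIdx g 2) = 0 := by
      by_cases c0 : j ≠ 0 ∧ j' ≠ 0
      · exact z0 (hin _ c0.1 c0.2)
      by_cases c1 : j ≠ 1 ∧ j' ≠ 1
      · exact z1 (hin _ c1.1 c1.2)
      exact hin _ (by omega) (by omega)
    have hall : ∀ l, x (lrcIdx g l) = 0 := by
      intro l
      fin_cases l
      exacts [(z2 hz).2, (z2 hz).1, hz]
    exact hn (hall j)
  funext i
  obtain ⟨g, j, rfl⟩ := lrcIdx_surj i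
  by_contra hne
  have ho : ∀ l, j ≠ l → x (lrcIdx g l) = 0 := fun l hl => by
    by_contra hc
    exact key g j l hl hne hc
  have hg := hs g
  apply hne
  fin_cases j
  · simpa [ho 1 (by decide), ho 2 (by decide)] using hg
  · simpa [ho 0 (by decide), ho 2 (by decide)] using hg
  · simpa [ho 0 (by decide), ho 1 (by decide)] using hg

lemma lrc_word_mem {F : Type*} [Field F] (a : F) :
    (fun i : Fin 18 => if i = 0 then a - 1 else if i = 1 then -a else if i = 2 then 1 else 0)
      ∈ LinearMap.ker (lrcCheck a) := by
  rw [LinearMap.mem_ker]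
  ext g
  · fin_cases g <;> simp [lrcCheck, lrcIdx]
    ring
  · simp [lrcCheck, lrcIdx, Fin.sum_univ_succ]

lemma exists_ne_zero_one : ∃ a : GaloisField 2 2, a ≠ 0 ∧ a ≠ 1 := by
  classical
  have hc : Nat.card (GaloisField 2 2) = 4 := by
    rw [GaloisField.card 2 2 (by norm_num)]; norm_num
  have : Fintype (GaloisField 2 2) := Fintype.ofFinite _
  rw [Nat.card_eq_fintype_card] at hc
  by_contra! h
  have : (Finset.univ : Finset (GaloisField 2 2)) ⊆ {0, 1} := by
    intro a _
    by_cases h0 : a = 0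
    · simp [h0]
    · simp [h a h0]
  have := (Finset.card_le_card this).trans Finset.card_le_two
  rw [Finset.card_univ] at this
  omega

/-- There is a linear code over the field with 4 elements of length 18, dimension 11,
minimum distance exactly 3, and locality 2; its parameters meet the Singleton-type
bound d ≤ n - k - ⌈k/r⌉ + 2 with equality, and n = 4 ^ 2 + 2 for q = 4. -/
theorem optimal_LRC_F4_cubic_surface :
    (∃ C : Submodule (GaloisField 2 2) (Fin 18 → GaloisField 2 2),
      Module.finrank (GaloisField 2 2) C = 11 ∧
      (∀ x : Fin 18 → GaloisField 2 2, x ∈ C → x ≠ 0 →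
        3 ≤ Nat.card {i : Fin 18 // x i ≠ 0}) ∧
      (∃ x : Fin 18 → GaloisField 2 2, x ∈ C ∧ x ≠ 0 ∧ Nat.card {i : Fin 18 // x i ≠ 0} = 3) ∧
      (∀ i : Fin 18, ∃ I : Finset (Fin 18), i ∉ I ∧ I.card ≤ 2 ∧
        ∀ x ∈ C, ∀ y ∈ C, (∀ j ∈ I, x j = y j) → x i = y i)) ∧
    (3 : ℕ) = 18 - 11 - ⌈(11 : ℚ) / 2⌉₊ + 2 ∧
    (18 : ℕ) = 4 ^ 2 + 2 := by
  classical
  obtain ⟨a, h0, h1⟩ := exists_ne_zero_one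
  refine ⟨⟨LinearMap.ker (lrcCheck a), ?_, ?_, ?_, ?_⟩, ?_, by norm_num⟩
  · have h := LinearMap.finrank_range_add_finrank_ker (lrcCheck a)
    rw [LinearMap.range_eq_top.2 (lrcCheck_surj a), finrank_top] at h
    simp only [Module.finrank_prod, Module.finrank_fintype_fun_eq_card, Fintype.card_fin,
      Module.finrank_self] at h
    omega
  · intro x hx hne
    by_contra hlt
    apply hne
    refine lrc_dist h0 h1 hx ?_
    intro i j k hij hik hjk hi hj
    by_contra hk
    apply hlt
    rw [Nat.card_eq_fintype_card, Fintype.card_subtype]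
    have hsub : ({i, j, k} : Finset (Fin 18)) ⊆ Finset.univ.filter (fun i => x i ≠ 0) := by
      intro l hl
      simp only [Finset.mem_insert, Finset.mem_singleton] at hl
      rcases hl with rfl | rfl | rfl <;> simpa
    have := Finset.card_le_card hsub
    rwa [Finset.card_eq_three.2 ⟨i, j, k, hij, hik, hjk, rfl⟩] at this
  · have ha : a - 1 ≠ 0 := sub_ne_zero.2 h1
    let x : Fin 18 → GaloisField 2 2 := fun i =>
      if i = 0 then a - 1 else if i = 1 then -a else if i = 2 then 1 else 0
    refine ⟨x, ?_, ?_, ?_⟩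
    · exact lrc_word_mem a
    · intro h
      have := congrFun h 2
      simp [x] at this
    · rw [Nat.card_eq_fintype_card, Fintype.card_subtype]
      have : Finset.univ.filter (fun i => x i ≠ 0) = {0, 1, 2} := by
        ext i
        by_cases c0 : i = 0
        · simp [x, c0, ha]
        by_cases c1 : i = 1
        · simp [x, c1, h0]
        by_cases c2 : i = 2
        · simp [x, c2]
        simp [x, c0, c1, c2]
      rw [this]
      decide
  · intro i
    obtain ⟨g, j, rfl⟩ := lrcIdx_surj i
    refine ⟨{lrcIdx g (j + 1), lrcIdx g (j + 2)}, ?_, Finset.card_le_two, ?_⟩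
    · simp only [Finset.mem_insert, Finset.mem_singleton]
      rintro (h | h)
      · have := (lrcIdx_inj h).2
        clear h
        revert this
        revert j
        decide
      · have := (lrcIdx_inj h).2
        clear h
        revert this
        revert j
        decide
    · intro x hx y hy hxy
      have e1 := hxy (lrcIdx g (j + 1)) (by simp)
      have e2 := hxy (lrcIdx g (j + 2)) (by simp)
      have hs : ∀ z ∈ LinearMap.ker (lrcCheck a),
          z (lrcIdx g j) + z (lrcIdx g (j + 1)) + z (lrcIdx g (j + 2)) = 0 := by
        intro z hz
        have h := (lrc_mem hz).1 g
        fin_cases j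
        · exact h
        · change z (lrcIdx g 1) + z (lrcIdx g 2) + z (lrcIdx g 0) = 0
          linear_combination h
        · change z (lrcIdx g 2) + z (lrcIdx g 0) + z (lrcIdx g 1) = 0
          linear_combination h
      linear_combination hs x hx - hs y hy - e1 - e2
  · have : ⌈(11 : ℚ) / 2⌉₊ = 6 := by
      rw [Nat.ceil_eq_iff (by norm_num)]
      norm_num
    rw [this]
end

section
/- There exists a linear code over the field with 5 elements of length 24, dimension 17, minimum distance exactly 3, and locality 3; its parameters attain the Singleton-type bound d ≤ n − k − ⌈k/r⌉ + 2 for codes of length n, dimension k, minimum distance d, and locality r, and its length satisfies n = q^2 − 1 for q = 5. -/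
/-- Parity-check map: six local checks (one for each block of four) and one global check. -/
def parityMap : (Fin 24 → ZMod 5) →ₗ[ZMod 5] ((Fin 6 → ZMod 5) × ZMod 5) where
  toFun x := (fun g => ∑ i : Fin 24, (if i.val / 4 = g.val then 1 else 0) * x i,
    ∑ i : Fin 24, ((i.val % 4 : ℕ) : ZMod 5) * x i)
  map_add' x y := by
    ext <;> simp only [Pi.add_apply, Prod.mk_add_mk, mul_add, Finset.sum_add_distrib]
  map_smul' c x := by
    ext <;> simp only [Pi.smul_apply, Prod.smul_mk, smul_eq_mul, RingHom.id_apply,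
      Finset.mul_sum, mul_left_comm]

lemma parityMap_fst (x : Fin 24 → ZMod 5) (g : Fin 6) : (parityMap x).1 g =
    ∑ i : Fin 24, (if i.val / 4 = g.val then 1 else 0) * x i := by
  simp only [parityMap, LinearMap.coe_mk, AddHom.coe_mk]

lemma parityMap_snd (x : Fin 24 → ZMod 5) : (parityMap x).2 =
    ∑ i : Fin 24, ((i.val % 4 : ℕ) : ZMod 5) * x i := by
  simp only [parityMap, LinearMap.coe_mk, AddHom.coe_mk]

lemma mem_ker_local {x : Fin 24 → ZMod 5} (hx : x ∈ LinearMap.ker parityMap) (a : Fin 24) :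
    ∑ i : Fin 24, (if i.val / 4 = a.val / 4 then 1 else 0) * x i = 0 := by
  have h := parityMap_fst x ⟨a.val / 4, by omega⟩
  rw [LinearMap.mem_ker.1 hx] at h
  exact h.symm

lemma mem_ker_global {x : Fin 24 → ZMod 5} (hx : x ∈ LinearMap.ker parityMap) :
    ∑ i : Fin 24, ((i.val % 4 : ℕ) : ZMod 5) * x i = 0 := by
  have h := parityMap_snd x
  rw [LinearMap.mem_ker.1 hx] at h
  exact h.symm

lemma parityMap_single (a : Fin 24) (c : ZMod 5) : parityMap (Pi.single a c) =
    (fun g => (if a.val / 4 = g.val then 1 else 0) * c, ((a.val % 4 : ℕ) : ZMod 5) * c) := by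
  refine Prod.ext (funext fun g => ?_) ?_
  · rw [parityMap_fst, Finset.sum_eq_single a] <;> simp +contextual [Pi.single_apply]
  · rw [parityMap_snd, Finset.sum_eq_single a] <;> simp +contextual [Pi.single_apply]

lemma parityMap_surj : Function.Surjective parityMap := by
  rintro ⟨s, t⟩
  refine ⟨∑ g : Fin 6, Pi.single (⟨4 * g.val, by omega⟩ : Fin 24) (s g)
    + (Pi.single 1 t - Pi.single 0 t), ?_⟩
  rw [map_add, map_sub, map_sum]
  simp only [parityMap_single]
  refine Prod.ext (funext fun g => ?_) ?_
  · simp [Prod.fst_sum, Finset.sum_apply, Fin.val_inj]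
  · simp [Prod.snd_sum]

lemma finrank_ker_parityMap : Module.finrank (ZMod 5) (LinearMap.ker parityMap) = 17 := by
  have : Fact (Nat.Prime 5) := ⟨by norm_num⟩
  have h := LinearMap.finrank_range_add_finrank_ker parityMap
  rw [LinearMap.range_eq_top.2 parityMap_surj, finrank_top] at h
  simp at h
  omega

lemma global_ne : ∀ a b : Fin 24, a ≠ b → a.val / 4 = b.val / 4 →
    ((a.val % 4 : ℕ) : ZMod 5) - ((b.val % 4 : ℕ) : ZMod 5) ≠ 0 := by
  decide +kernel

/-- A word of the kernel supported on two positions vanishes. -/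
lemma two_support {x : Fin 24 → ZMod 5} (hx : x ∈ LinearMap.ker parityMap) {a b : Fin 24}
    (hab : a ≠ b) (h0 : ∀ i, i ≠ a → i ≠ b → x i = 0) : x a = 0 := by
  have : Fact (Nat.Prime 5) := ⟨by norm_num⟩
  have key : ∀ c : Fin 24 → ZMod 5, ∑ i, c i * x i = c a * x a + c b * x b := by
    intro c
    exact Fintype.sum_eq_add a b hab (fun i hi => by rw [h0 i hi.1 hi.2, mul_zero])
  have h1 := mem_ker_local hx a
  have h2 := mem_ker_global hx
  rw [key] at h1 h2
  by_cases hb : a.val / 4 = b.val / 4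
  · simp only [hb, if_true, one_mul] at h1
    have h3 := global_ne a b hab hb
    have h4 : (((a.val % 4 : ℕ) : ZMod 5) - ((b.val % 4 : ℕ) : ZMod 5)) * x a = 0 := by
      linear_combination h2 - ((b.val % 4 : ℕ) : ZMod 5) * h1
    exact (mul_eq_zero.1 h4).resolve_left h3
  · simpa [Ne.symm hb] using h1

lemma min_weight {x : Fin 24 → ZMod 5} (hx : x ∈ LinearMap.ker parityMap) (hne : x ≠ 0) :
    3 ≤ Nat.card {i : Fin 24 // x i ≠ 0} := by
  by_contra hlt
  rw [Nat.card_eq_fintype_card, Fintype.card_subtype] at hlt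
  obtain ⟨a, ha⟩ := Function.ne_iff.1 hne
  have hmem : a ∈ Finset.univ.filter (fun i => x i ≠ 0) := by simpa using ha
  have hc := Finset.card_erase_of_mem hmem
  have hle : ((Finset.univ.filter (fun i => x i ≠ 0)).erase a).card ≤ 1 := by omega
  obtain ⟨b, hab, hb⟩ : ∃ b, a ≠ b ∧
      ∀ i ∈ (Finset.univ.filter (fun i => x i ≠ 0)).erase a, i = b := by
    rcases Finset.eq_empty_or_nonempty ((Finset.univ.filter (fun i => x i ≠ 0)).erase a) with
      he | ⟨b, hb⟩
    · obtain ⟨b, hb⟩ := exists_ne a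
      exact ⟨b, hb.symm, by simp [he]⟩
    · exact ⟨b, (Finset.ne_of_mem_erase hb).symm,
        fun i hi => Finset.card_le_one.1 hle i hi b hb⟩
  refine ha (two_support hx hab fun i hia hib => ?_)
  by_contra h
  exact hib (hb i (by simp [hia, h]))

lemma local_card : ∀ i : Fin 24,
    (Finset.univ.filter (fun j : Fin 24 => j.val / 4 = i.val / 4 ∧ j ≠ i)).card ≤ 3 := by
  decide +kernel

/-- There is a linear code over the field with 5 elements of length 24, dimension 17,
minimum distance exactly 3, and locality 3; its parameters meet the Singleton-type
bound d ≤ n - k - ⌈k/r⌉ + 2 with equality, and n = 5 ^ 2 - 1 for q = 5. -/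
theorem optimal_LRC_F5_K3_surface :
    (∃ C : Submodule (ZMod 5) (Fin 24 → ZMod 5),
      Module.finrank (ZMod 5) C = 17 ∧
      (∀ x : Fin 24 → ZMod 5, x ∈ C → x ≠ 0 →
        3 ≤ Nat.card {i : Fin 24 // x i ≠ 0}) ∧
      (∃ x : Fin 24 → ZMod 5, x ∈ C ∧ x ≠ 0 ∧ Nat.card {i : Fin 24 // x i ≠ 0} = 3) ∧
      (∀ i : Fin 24, ∃ I : Finset (Fin 24), i ∉ I ∧ I.card ≤ 3 ∧
        ∀ x ∈ C, ∀ y ∈ C, (∀ j ∈ I, x j = y j) → x i = y i)) ∧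
    (3 : ℕ) = 24 - 17 - ⌈(17 : ℚ) / 3⌉₊ + 2 ∧
    (24 : ℕ) = 5 ^ 2 - 1 := by
  refine ⟨⟨LinearMap.ker parityMap, finrank_ker_parityMap, fun x hx h => min_weight hx h,
    ?_, ?_⟩, ?_, by norm_num⟩
  · refine ⟨fun i => if i = 0 then 1 else if i = 1 then 3 else if i = 2 then 1 else 0,
      ?_, ?_, ?_⟩
    · rw [LinearMap.mem_ker]
      refine Prod.ext (funext ?_) ?_
      · intro g
        rw [parityMap_fst]
        revert g
        decide +kernel
      · rw [parityMap_snd]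
        decide +kernel
    · intro h
      exact absurd (congrFun h 0) (by decide)
    · rw [Nat.card_eq_fintype_card, Fintype.card_subtype]
      decide +kernel
  · intro i
    refine ⟨Finset.univ.filter (fun j : Fin 24 => j.val / 4 = i.val / 4 ∧ j ≠ i), by simp,
      local_card i, fun x hx y hy hxy => ?_⟩
    have h := mem_ker_local (Submodule.sub_mem _ hx hy) i
    rw [Finset.sum_eq_single i] at h
    · simpa [sub_eq_zero] using h
    · intro j _ hj
      by_cases hji : j.val / 4 = i.val / 4
      · simp [hxy j (by simp [hji, hj])]
      · simp [hji]
    · simp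
  · have : ⌈(17 : ℚ) / 3⌉₊ = 6 := by
      rw [Nat.ceil_eq_iff (by norm_num)]
      norm_num
    rw [this]
end
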